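/- Let A not be K-trivial, P a Π⁰₁ class, τ a finite string, and Q a Π⁰₁(A) class containing only A-random sequences, with d(τ, P ∩ Q) ≥ δ > 0. Then there exists an (A ⊕ ∅′)-computable infinite prefix-free sequence of strings ⟨ρ_i⟩ such that each ρ_i extends τ, ρ_i ∉ Q, and d(ρ_i, P) ≥ δ/2. -/

import Mathlib

open MeasureTheory ENNReal

/-! ### Cantor space and the uniform (coin-flipping) measure -/

/-- The binary digits of a real number in `[0,1)`, giving a point of Cantor space. -/
noncomputable def binaryDigits (x : ℝ) : ℕ → Bool :=
  fun n => decide (⌊x * 2 ^ (n + 1)⌋ % 2 = 1)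

/-- The uniform (Lebesgue / coin-flipping) measure on Cantor space `2^ω`,
obtained as the pushforward of Lebesgue measure on `[0,1)` under binary expansion. -/
noncomputable def μCantor : Measure (ℕ → Bool) :=
  Measure.map binaryDigits (volume.restrict (Set.Ico (0 : ℝ) 1))

/-- `σ` is an initial segment of the infinite sequence `X`. -/
def IsPrefixOf (σ : List Bool) (X : ℕ → Bool) : Prop :=
  ∀ i : Fin σ.length, X i = σ.get i

/-- The cylinder determined by a finite binary string. -/
def cylinder (σ : List Bool) : Set (ℕ → Bool) := {X | IsPrefixOf σ X}

/-- The open set generated by a set of finite binary strings. -/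
def openOf (S : Set (List Bool)) : Set (ℕ → Bool) := ⋃ σ ∈ S, cylinder σ

/-- The density of a set `P` above the string `τ`: `μ([τ] ∩ P) · 2^{|τ|}`. -/
noncomputable def dens (τ : List Bool) (P : Set (ℕ → Bool)) : ℝ≥0∞ :=
  μCantor (cylinder τ ∩ P) * 2 ^ τ.length

/-- The length-`n` initial segment of `X`, as a finite binary string. -/
def strPrefix (X : ℕ → Bool) (n : ℕ) : List Bool := (List.range n).map X

/-- A set of strings is prefix-free if no element is a proper prefix of another. -/
def PrefixFreeSet (S : Set (List Bool)) : Prop :=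
  ∀ σ ∈ S, ∀ τ ∈ S, σ <+: τ → σ = τ

/-- The weight `∑_{σ ∈ S} 2^{-|σ|}` of a set of strings. -/
noncomputable def weight (S : Set (List Bool)) : ℝ≥0∞ :=
  ∑' σ : S, 2⁻¹ ^ (σ : List Bool).length

/-- A set of strings is bounded if its weight is finite. -/
def BoundedStr (S : Set (List Bool)) : Prop := weight S < ⊤

/-- The tail `X(·+k)` of an infinite binary sequence. -/
def tailSeq (X : ℕ → Bool) (k : ℕ) : ℕ → Bool := fun n => X (n + k)

/-! ### Oracle computability -/

/-- The `e`-th computably enumerable set of naturals (the domain of the `e`-th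
partial computable function). -/
def WEnum (e n : ℕ) : Prop := ((Denumerable.ofNat Nat.Partrec.Code e).eval n).Dom

/-- `OracleComputes e X n m` holds if the `e`-th Turing functional with oracle `X`
outputs `m` on input `n`; a Turing functional is presented by the c.e. set `W_e`
of coded axioms `(σ, n, m)`, and `Γ_e^X(n) = m` iff some initial segment `σ` of `X`
has `(σ, n, m) ∈ W_e`. -/
def OracleComputes (e : ℕ) (X : ℕ → Bool) (n m : ℕ) : Prop :=
  ∃ σ : List Bool, IsPrefixOf σ X ∧
    WEnum e (Nat.pair (Encodable.encode σ) (Nat.pair n m))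

def natOfBool (b : Bool) : ℕ := cond b 1 0

/-- `f : ℕ → ℕ` is computable with oracle `A`: some Turing functional with oracle `A`
has graph exactly `f`. -/
def FnComputableIn (f : ℕ → ℕ) (A : ℕ → Bool) : Prop :=
  ∃ e, ∀ n m, OracleComputes e A n m ↔ m = f n

/-- Turing reducibility `B ≤_T A` for subsets of `ω` (as elements of Cantor space). -/
def TuringLE (B A : ℕ → Bool) : Prop := FnComputableIn (fun n => natOfBool (B n)) A

/-- Turing equivalence. -/
def TuringEquiv (A B : ℕ → Bool) : Prop := TuringLE A B ∧ TuringLE B A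

/-- The Turing join `A ⊕ B`. -/
def joinSet (A B : ℕ → Bool) : ℕ → Bool :=
  fun n => if n % 2 = 0 then A (n / 2) else B (n / 2)

open Classical in
/-- The Turing jump `A′ = {e : Γ_e^A(e)↓}`. -/
noncomputable def jump (A : ℕ → Bool) : ℕ → Bool :=
  fun e => decide (∃ m, OracleComputes e A e m)

/-- The empty oracle. -/
def emptyOracle : ℕ → Bool := fun _ => false

/-- The halting problem `∅′`. -/
noncomputable def zeroJump : ℕ → Bool := jump emptyOracle

/-- A set is computable iff it is Turing reducible to the empty oracle. -/
def ComputableSet (A : ℕ → Bool) : Prop := TuringLE A emptyOracle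

/-- A set of naturals is c.e. in `A`. -/
def CeIn (A : ℕ → Bool) (S : Set ℕ) : Prop :=
  ∃ e, ∀ n, n ∈ S ↔ ∃ m, OracleComputes e A n m

/-- A set of strings is c.e. in `A`. -/
def CeStrIn (A : ℕ → Bool) (S : Set (List Bool)) : Prop :=
  ∃ e, ∀ σ : List Bool, σ ∈ S ↔ ∃ m, OracleComputes e A (Encodable.encode σ) m

/-- A c.e. set of strings. -/
def CeStr (S : Set (List Bool)) : Prop := CeStrIn emptyOracle S

/-! ### Π⁰₁ classes, Martin-Löf randomness, K-triviality -/

/-- A `Π⁰₁(A)` class: the complement of the union of cylinders over an `A`-c.e.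
set of strings. -/
def Pi01In (A : ℕ → Bool) (P : Set (ℕ → Bool)) : Prop :=
  ∃ S : Set (List Bool), CeStrIn A S ∧ P = (openOf S)ᶜ

/-- A `Π⁰₁` class. -/
def Pi01 (P : Set (ℕ → Bool)) : Prop := Pi01In emptyOracle P

/-- The `n`-th level of the `e`-th `A`-effective sequence of open sets. -/
def testLevel (e : ℕ) (A : ℕ → Bool) (n : ℕ) : Set (ℕ → Bool) :=
  openOf {σ | ∃ m, OracleComputes e A (Nat.pair n (Encodable.encode σ)) m}

/-- A Martin-Löf test relative to `A`: a uniformly `A`-c.e. sequence of open sets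
`G n` with `μ(G n) ≤ 2^{-n}`. -/
def MLTestIn (A : ℕ → Bool) (G : ℕ → Set (ℕ → Bool)) : Prop :=
  (∃ e, ∀ n, G n = testLevel e A n) ∧ ∀ n, μCantor (G n) ≤ 2⁻¹ ^ n

/-- `X` is Martin-Löf random relative to `A`: it passes every `A`-Martin-Löf test. -/
def MLRandomIn (A X : ℕ → Bool) : Prop :=
  ∀ G : ℕ → Set (ℕ → Bool), MLTestIn A G → ∃ n, X ∉ G n

/-- `X` is Martin-Löf random. -/
def MLRandom (X : ℕ → Bool) : Prop := MLRandomIn emptyOracle X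

/-- The domain of the `e`-th machine, viewed as a set of binary strings. -/
def machineDom (e : ℕ) : Set (List Bool) :=
  {σ | ((Denumerable.ofNat Nat.Partrec.Code e).eval (Encodable.encode σ)).Dom}

/-- The `e`-th machine is prefix-free. -/
def PrefixFreeMachine (e : ℕ) : Prop := PrefixFreeSet (machineDom e)

/-- Prefix-free Kolmogorov complexity (defined, up to an additive constant, as the
least `|σ| + 2e + 2` over prefix-free machines `e` and programs `σ` producing `x`). -/
noncomputable def Kcpx (x : ℕ) : ℕ :=
  sInf {k | ∃ e, ∃ σ : List Bool, PrefixFreeMachine e ∧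
    x ∈ (Denumerable.ofNat Nat.Partrec.Code e).eval (Encodable.encode σ) ∧
    k = σ.length + 2 * e + 2}

/-- `K(n)` means `K(1^n)`. -/
noncomputable def KofNat (n : ℕ) : ℕ := Kcpx (Encodable.encode (List.replicate n true))

/-- `A` is K-trivial: `K(A↾n) ≤ K(n) + c` for some constant `c`. -/
def KTrivial (A : ℕ → Bool) : Prop :=
  ∃ c, ∀ n, Kcpx (Encodable.encode (strPrefix A n)) ≤ KofNat n + c


theorem take_pre {α : Type} (n : ℕ) (l : List α) : l.take n <+: l :=
  ⟨l.drop n, List.take_append_drop n l⟩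

theorem mem_cyl {σ : List Bool} {X : ℕ → Bool} : X ∈ _root_.cylinder σ ↔ IsPrefixOf σ X := Iff.rfl

theorem strPrefix_length (X : ℕ → Bool) (n : ℕ) : (strPrefix X n).length = n := by
  simp [strPrefix]

theorem isPrefixOf_iff (σ : List Bool) (X : ℕ → Bool) :
    IsPrefixOf σ X ↔ strPrefix X σ.length = σ := by
  constructor
  · intro h
    apply List.ext_getElem
    · simp [strPrefix]
    · intro i h1 h2
      simpa [strPrefix] using h ⟨i, h2⟩
  · intro h i
    have : (strPrefix X σ.length)[i.1]'(by simp [strPrefix]) = σ[i.1] := by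
      simp only [h]
    simpa [strPrefix] using this

theorem isPrefixOf_strPrefix (X : ℕ → Bool) (n : ℕ) : IsPrefixOf (strPrefix X n) X := by
  rw [isPrefixOf_iff, strPrefix_length]

theorem strPrefix_take (X : ℕ → Bool) {m n : ℕ} (h : m ≤ n) :
    (strPrefix X n).take m = strPrefix X m := by
  simp [strPrefix, ← List.map_take, List.take_range, h]

theorem strPrefix_le (X : ℕ → Bool) {m n : ℕ} (h : m ≤ n) :
    strPrefix X m <+: strPrefix X n := by
  rw [← strPrefix_take X h]; exact take_pre _ _

theorem strPrefix_succ (X : ℕ → Bool) (n : ℕ) :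
    strPrefix X (n+1) = strPrefix X n ++ [X n] := by
  simp [strPrefix, List.range_succ]

theorem isPrefixOf_mono {s t : List Bool} {X : ℕ → Bool} (h : s <+: t)
    (ht : IsPrefixOf t X) : IsPrefixOf s X := by
  rw [isPrefixOf_iff] at *
  have h1 := strPrefix_take X h.length_le
  rw [ht] at h1
  rw [← h1]
  exact (List.prefix_iff_eq_take.1 h).symm

theorem prefix_of_isPrefixOf {s t : List Bool} {X : ℕ → Bool} (hs : IsPrefixOf s X)
    (ht : IsPrefixOf t X) (h : s.length ≤ t.length) : s <+: t := by
  rw [isPrefixOf_iff] at *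
  rw [← hs, ← ht]
  exact strPrefix_le X h

theorem comparable_of_isPrefixOf {s t : List Bool} {X : ℕ → Bool} (hs : IsPrefixOf s X)
    (ht : IsPrefixOf t X) : s <+: t ∨ t <+: s := by
  rcases le_total s.length t.length with h | h
  · exact Or.inl (prefix_of_isPrefixOf hs ht h)
  · exact Or.inr (prefix_of_isPrefixOf ht hs h)

theorem cylinder_subset {s t : List Bool} (h : s <+: t) : cylinder t ⊆ cylinder s :=
  fun _ hX => isPrefixOf_mono h hX

theorem isPrefixOf_append_singleton (σ : List Bool) (b : Bool) (X : ℕ → Bool) :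
    IsPrefixOf (σ ++ [b]) X ↔ IsPrefixOf σ X ∧ X σ.length = b := by
  rw [isPrefixOf_iff, isPrefixOf_iff]
  simp only [List.length_append, List.length_singleton, strPrefix_succ]
  constructor
  · intro h
    have := List.append_inj h (by simp [strPrefix])
    exact ⟨this.1, by simpa using this.2⟩
  · rintro ⟨h1, h2⟩; rw [h1, h2]

theorem isPrefixOf_nil (X : ℕ → Bool) : IsPrefixOf [] X := fun i => i.elim0

theorem cylinder_eq_pi (σ : List Bool) : cylinder σ =
    Set.pi (Finset.range σ.length : Set ℕ) (fun i => {b | σ[i]? = some b}) := by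
  ext X
  simp only [mem_cyl, IsPrefixOf, Set.mem_pi, Finset.coe_range, Set.mem_Iio]
  constructor
  · intro h i hi
    have := h ⟨i, hi⟩
    simp [List.getElem?_eq_getElem hi, this]
  · intro h i
    have := h i.1 i.2
    simpa [List.getElem?_eq_getElem i.2, eq_comm] using this

theorem measurableSet_cylinder (σ : List Bool) : MeasurableSet (cylinder σ) := by
  rw [cylinder_eq_pi]
  exact MeasurableSet.pi (Set.to_countable _) (fun i _ => trivial)

theorem measurableSet_openOf (S : Set (List Bool)) : MeasurableSet (openOf S) :=
  MeasurableSet.biUnion (Set.to_countable _) (fun σ _ => measurableSet_cylinder σ)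

theorem measurable_binaryDigits : Measurable binaryDigits := by
  rw [measurable_pi_iff]
  intro n
  have h1 : Measurable (fun x : ℝ => ⌊x * 2 ^ (n+1)⌋) :=
    Int.measurable_floor.comp (measurable_id.mul_const _)
  have h2 : Measurable (fun z : ℤ => decide (z % 2 = 1)) := measurable_from_top
  exact h2.comp h1

/-- value of a binary string -/
def bval (σ : List Bool) : ℕ := σ.foldl (fun a b => 2 * a + natOfBool b) 0

theorem bval_append (σ : List Bool) (b : Bool) : bval (σ ++ [b]) = 2 * bval σ + natOfBool b := by
  simp [bval]

theorem bval_lt (σ : List Bool) : bval σ < 2 ^ σ.length := by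
  induction σ using List.reverseRecOn with
  | nil => simp [bval]
  | append_singleton σ b ih =>
    rw [bval_append]
    have : natOfBool b ≤ 1 := by cases b <;> simp [natOfBool]
    simp only [List.length_append, List.length_singleton, pow_succ]
    omega

theorem digits_iff (x : ℝ) (hx : x ∈ Set.Ico (0:ℝ) 1) (σ : List Bool) :
    IsPrefixOf σ (binaryDigits x) ↔ ⌊x * 2 ^ σ.length⌋ = (bval σ : ℤ) := by
  induction σ using List.reverseRecOn with
  | nil =>
    simp only [isPrefixOf_nil, true_iff, bval, List.length_nil, pow_zero, mul_one,
      List.foldl_nil, Nat.cast_zero]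
    rw [Int.floor_eq_zero_iff]; exact hx
  | append_singleton σ b ih =>
    rw [isPrefixOf_append_singleton, ih, bval_append]
    simp only [List.length_append, List.length_singleton, binaryDigits]
    have h2 : ⌊x * 2 ^ σ.length⌋ = ⌊x * 2 ^ (σ.length+1)⌋ / 2 := by
      have : x * 2 ^ σ.length = x * 2 ^ (σ.length+1) / ((2:ℕ):ℝ) := by
        push_cast; rw [pow_succ]; ring
      rw [this, Int.floor_div_natCast]; rfl
    rw [h2]
    generalize ⌊x * 2 ^ (σ.length+1)⌋ = z
    cases b <;> simp [natOfBool] <;> omega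

theorem mu_cylinder (σ : List Bool) : μCantor (cylinder σ) = 2⁻¹ ^ σ.length := by
  rw [μCantor, Measure.map_apply measurable_binaryDigits (measurableSet_cylinder σ),
    Measure.restrict_apply (measurable_binaryDigits (measurableSet_cylinder σ))]
  have hpos : (0:ℝ) < 2 ^ σ.length := by positivity
  have : binaryDigits ⁻¹' cylinder σ ∩ Set.Ico (0:ℝ) 1 =
      Set.Ico ((bval σ : ℝ) / 2 ^ σ.length) ((bval σ + 1 : ℝ) / 2 ^ σ.length) := by
    ext x
    simp only [Set.mem_inter_iff, Set.mem_preimage, mem_cyl]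
    constructor
    · rintro ⟨h, hx⟩
      rw [digits_iff x hx, Int.floor_eq_iff] at h
      rw [Set.mem_Ico, div_le_iff₀ hpos, lt_div_iff₀ hpos]
      simpa using h
    · intro h
      have h' := h
      rw [Set.mem_Ico, div_le_iff₀ hpos, lt_div_iff₀ hpos] at h
      have hx : x ∈ Set.Ico (0:ℝ) 1 := by
        refine ⟨le_trans (by positivity) h'.1, lt_of_lt_of_le h'.2 ?_⟩
        rw [div_le_one hpos]
        exact_mod_cast bval_lt σ
      refine ⟨?_, hx⟩
      rw [digits_iff x hx, Int.floor_eq_iff]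
      simpa using h
  rw [this, Real.volume_Ico, ← sub_div, add_sub_cancel_left, ENNReal.ofReal_div_of_pos hpos,
    ENNReal.ofReal_one, ENNReal.ofReal_pow (by norm_num), one_div, ← ENNReal.inv_pow]
  simp

instance : IsProbabilityMeasure μCantor := by
  constructor
  have h := mu_cylinder []
  have : cylinder [] = Set.univ := by ext X; simp [mem_cyl, isPrefixOf_nil]
  simpa [this] using h

/-- fair coin -/
noncomputable def coin : Measure Bool :=
  (2⁻¹ : ℝ≥0∞) • (Measure.dirac true + Measure.dirac false)

theorem coin_singleton (b : Bool) : coin {b} = 2⁻¹ := by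
  cases b <;> simp [coin]

instance : IsProbabilityMeasure coin := by
  constructor
  simp [coin]
  exact ENNReal.inv_two_add_inv_two

theorem infinitePi_cyl (σ : List Bool) :
    Measure.infinitePi (fun _ : ℕ => coin) (cylinder σ) = 2⁻¹ ^ σ.length := by
  rw [cylinder_eq_pi, Measure.infinitePi_pi _ (fun i _ => MeasurableSet.of_discrete)]
  rw [Finset.prod_congr rfl (g := fun _ => (2⁻¹ : ℝ≥0∞))]
  · simp
  · intro i hi
    rw [Finset.mem_range] at hi
    have : {b | σ[i]? = some b} = {σ[i]} := by
      ext b; simp [List.getElem?_eq_getElem hi, eq_comm]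
    rw [this, coin_singleton]

theorem mu_eq : μCantor = Measure.infinitePi (fun _ : ℕ => coin) := by
  refine ext_of_generate_finite (insert ∅ (Set.range cylinder)) ?_ ?_ ?_ (by simp)
  · apply le_antisymm
    · rw [MeasurableSpace.pi, iSup_le_iff]
      intro n
      rw [← measurable_iff_comap_le]
      apply measurable_to_bool
      have : (fun X : ℕ → Bool => X n) ⁻¹' {true} =
          ⋃ σ ∈ {σ : List Bool | σ.length = n + 1 ∧ σ[n]? = some true}, cylinder σ := by
        ext X
        simp only [Set.mem_preimage, Set.mem_singleton_iff, Set.mem_ofPred_eq, Set.mem_iUnion,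
          exists_prop]
        constructor
        · intro h
          refine ⟨strPrefix X (n+1), ⟨strPrefix_length _ _, ?_⟩, isPrefixOf_strPrefix _ _⟩
          simp [strPrefix, h]
        · rintro ⟨σ, ⟨h1, h2⟩, h3⟩
          have := h3 ⟨n, by omega⟩
          rw [List.getElem?_eq_getElem (by omega)] at h2
          simpa using this.trans (by simpa using h2)
      rw [this]
      refine MeasurableSet.biUnion (Set.to_countable _) (fun σ _ => ?_)
      exact MeasurableSpace.measurableSet_generateFrom (Or.inr ⟨σ, rfl⟩)
    · apply MeasurableSpace.generateFrom_le
      rintro s (rfl | ⟨σ, rfl⟩)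
      · exact MeasurableSet.empty
      · exact measurableSet_cylinder σ
  · rintro s hs t ht hne
    rcases hs with rfl | ⟨σ, rfl⟩
    · simp at hne
    rcases ht with rfl | ⟨τ, rfl⟩
    · simp at hne
    obtain ⟨X, h1, h2⟩ := hne
    right
    rcases comparable_of_isPrefixOf h1 h2 with h | h
    · exact ⟨τ, by rw [Set.inter_eq_right.2 (cylinder_subset h)]⟩
    · exact ⟨σ, by rw [Set.inter_eq_left.2 (cylinder_subset h)]⟩
  · rintro s (rfl | ⟨σ, rfl⟩)
    · simp
    · rw [mu_cylinder, infinitePi_cyl]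

theorem mem_openOf {S : Set (List Bool)} {X : ℕ → Bool} :
    X ∈ openOf S ↔ ∃ σ ∈ S, IsPrefixOf σ X := by
  simp [openOf, mem_cyl]

theorem disjoint_cylinder {s t : List Bool} (h : ¬ s <+: t) (h' : ¬ t <+: s) :
    Disjoint (cylinder s) (cylinder t) := by
  rw [Set.disjoint_left]
  intro X h1 h2
  rcases comparable_of_isPrefixOf h1 h2 with h3 | h3 <;> contradiction

theorem kraft (S : Set (List Bool)) (hS : PrefixFreeSet S) :
    ∑' σ : S, (2⁻¹ : ℝ≥0∞) ^ (σ : List Bool).length ≤ 1 := by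
  have : ∑' σ : S, μCantor (cylinder σ) = μCantor (⋃ σ : S, cylinder σ) := by
    rw [measure_iUnion]
    · intro s t hst
      apply disjoint_cylinder
      · intro h; exact hst (Subtype.ext (hS _ s.2 _ t.2 h))
      · intro h; exact hst (Subtype.ext (hS _ t.2 _ s.2 h).symm)
    · intro s; exact measurableSet_cylinder _
  simp only [mu_cylinder] at this
  rw [this]
  exact prob_le_one

/-- independent blocks -/
def blk (i w : ℕ) : Set (ℕ → Bool) := {X | ∀ j < w, X (Nat.pair i j) = true}

theorem mu_blk_inter (s : Finset ℕ) (w : ℕ → ℕ) :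
    μCantor (⋂ i ∈ s, blk i (w i)) = ∏ i ∈ s, 2⁻¹ ^ (w i) := by
  have : (⋂ i ∈ s, blk i (w i)) =
      Set.pi ((s.sigma (fun i => Finset.range (w i))).image (fun p => Nat.pair p.1 p.2) :
        Finset ℕ) (fun _ => ({true} : Set Bool)) := by
    ext X
    simp only [Set.mem_iInter, blk, Set.mem_ofPred_eq, Set.mem_pi, Set.mem_singleton_iff,
      Finset.coe_image, Set.mem_image, Finset.mem_coe, Finset.mem_sigma, Finset.mem_range]
    constructor
    · rintro h _ ⟨p, ⟨h1, h2⟩, rfl⟩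
      exact h _ h1 _ h2
    · intro h i hi j hj
      exact h _ ⟨⟨i, j⟩, ⟨hi, hj⟩, rfl⟩
  rw [mu_eq, this, Measure.infinitePi_pi _ (fun i _ => MeasurableSet.of_discrete)]
  simp only [coin_singleton, Finset.prod_const]
  rw [Finset.card_image_of_injOn, Finset.card_sigma, Finset.prod_pow_eq_pow_sum]
  · simp
  · rintro ⟨a, b⟩ _ ⟨c, d⟩ _ h
    simp only [Nat.pair_eq_pair] at h
    obtain ⟨rfl, rfl⟩ := h; rfl

theorem mu_blk (i w : ℕ) : μCantor (blk i w) = 2⁻¹ ^ w := by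
  simpa using mu_blk_inter {i} (fun _ => w)

theorem measurableSet_blk (i w : ℕ) : MeasurableSet (blk i w) := by
  have : blk i w = ⋂ j ∈ Finset.range w, {X | X (Nat.pair i j) = true} := by
    ext X; simp [blk]
  rw [this]
  refine Finset.measurableSet_biInter _ (fun j _ => ?_)
  exact measurableSet_eq_fun (measurable_pi_apply (Nat.pair i j)) measurable_const

open Classical in
theorem blk_sum_lt_top (I : Set ℕ) (w : ℕ → ℕ) (R : Set (ℕ → Bool)) (hR : 0 < μCantor R)
    (h : ∀ i ∈ I, Disjoint R (blk i (w i))) :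
    ∑' i : I, (2⁻¹ : ℝ≥0∞) ^ (w i) < ⊤ := by
  by_contra hc
  rw [not_lt, top_le_iff] at hc
  let C : ℕ → Set (ℕ → Bool) := fun i => if i ∈ I then blk i (w i) else ∅
  have hm : ∀ i, MeasurableSet (C i) := by
    intro i; dsimp [C]; split_ifs
    · exact measurableSet_blk _ _
    · exact MeasurableSet.empty
  have hind : ProbabilityTheory.iIndepSet C μCantor := by
    rw [ProbabilityTheory.iIndepSet_iff_meas_biInter hm]
    intro s
    by_cases hs : ∀ i ∈ s, i ∈ I
    · have h1 : (⋂ i ∈ s, C i) = ⋂ i ∈ s, blk i (w i) := by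
        refine Set.iInter₂_congr (fun i hi => ?_)
        simp [C, hs i hi]
      rw [h1, mu_blk_inter]
      refine Finset.prod_congr rfl (fun i hi => ?_)
      simp [C, hs i hi, mu_blk]
    · push Not at hs
      obtain ⟨i, hi, hiI⟩ := hs
      have h0 : C i = ∅ := by simp [C, hiI]
      rw [Finset.prod_eq_zero hi (by simp [h0])]
      refine measure_mono_null (Set.iInter₂_subset i hi) (by simp [h0])
  have hsum : ∑' i, μCantor (C i) = ⊤ := by
    rw [← hc, tsum_subtype I (fun i => (2⁻¹ : ℝ≥0∞) ^ (w i))]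
    congr 1; ext i
    by_cases hi : i ∈ I <;> simp [C, hi, mu_blk]
  have := ProbabilityTheory.measure_limsup_eq_one hm hind hsum
  have hdis : Disjoint R (Filter.limsup C Filter.atTop) := by
    rw [Set.disjoint_left]
    intro X hX hl
    rw [Filter.limsup_eq_iInf_iSup_of_nat] at hl
    simp only [Set.iInf_eq_iInter, Set.iSup_eq_iUnion, Set.mem_iInter, Set.mem_iUnion] at hl
    obtain ⟨i, -, hi⟩ := hl 0
    by_cases hI : i ∈ I
    · simp only [C, hI, if_true] at hi
      exact Set.disjoint_left.1 (h i hI) hX hi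
    · simp [C, hI] at hi
  have hml : MeasurableSet (Filter.limsup C Filter.atTop) :=
    MeasurableSet.measurableSet_limsup hm
  have h2 := measure_union hdis hml (μ := μCantor)
  rw [this] at h2
  have h3 : μCantor (R ∪ Filter.limsup C Filter.atTop) ≤ 1 := prob_le_one
  rw [h2] at h3
  have : μCantor R + 1 ≤ 0 + 1 := by simpa using h3
  rw [ENNReal.add_le_add_iff_right (by simp)] at this
  exact absurd (le_antisymm this bot_le) hR.ne'



section sig
variable {α β γ : Type} [Primcodable α] [Primcodable β] [Primcodable γ]

theorem pp_forall_mem {f : α → List β} {q : α → β → Prop} (hf : Primrec f)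
    (hq : PrimrecPred fun x : α × β => q x.1 x.2) : PrimrecPred fun a => ∀ j ∈ f a, q a j := by
  have h : PrimrecRel (fun (j : β) (a : α) => q a j) :=
    PrimrecPred.comp (p := fun x : α × β => q x.1 x.2) hq (Primrec.snd.pair Primrec.fst)
  exact PrimrecRel.comp h.forall_mem_list hf Primrec.id

theorem pp_exists_mem {f : α → List β} {q : α → β → Prop} (hf : Primrec f)
    (hq : PrimrecPred fun x : α × β => q x.1 x.2) : PrimrecPred fun a => ∃ j ∈ f a, q a j := by
  have h : PrimrecRel (fun (j : β) (a : α) => q a j) :=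
    PrimrecPred.comp (p := fun x : α × β => q x.1 x.2) hq (Primrec.snd.pair Primrec.fst)
  exact PrimrecRel.comp h.exists_mem_list hf Primrec.id

theorem pp_forall_lt {f : α → ℕ} {q : α → ℕ → Prop} (hf : Primrec f)
    (hq : PrimrecPred fun x : α × ℕ => q x.1 x.2) : PrimrecPred fun a => ∀ j < f a, q a j :=
  (pp_forall_mem (Primrec.list_range.comp hf) hq).of_eq fun a => by simp

theorem pp_exists_lt {f : α → ℕ} {q : α → ℕ → Prop} (hf : Primrec f)
    (hq : PrimrecPred fun x : α × ℕ => q x.1 x.2) : PrimrecPred fun a => ∃ j < f a, q a j :=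
  (pp_exists_mem (Primrec.list_range.comp hf) hq).of_eq fun a => by simp

theorem prim_pow : Primrec₂ (fun a b : ℕ => a ^ b) :=
  Primrec₂.unpaired'.1 Nat.Primrec.pow

theorem pp_pre : PrimrecPred fun x : List β × List β => x.1 <+: x.2 := by
  have : PrimrecPred fun x : List β × List β => x.1 = x.2.take x.1.length :=
    Primrec.eq.comp Primrec.fst
      (Primrec.list_take.comp (Primrec.list_length.comp Primrec.fst) Primrec.snd)
  exact this.of_eq fun x => List.prefix_iff_eq_take.symm

/-- Σ⁰₁ predicates. -/
def Sig (p : α → Prop) : Prop :=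
  ∃ q : α × ℕ → Prop, PrimrecPred q ∧ ∀ a, p a ↔ ∃ k, q (a, k)

theorem Sig.of_eq {p q : α → Prop} (h : Sig p) (e : ∀ a, p a ↔ q a) : Sig q := by
  obtain ⟨r, h1, h2⟩ := h
  exact ⟨r, h1, fun a => (e a).symm.trans (h2 a)⟩

theorem Sig.prim {p : α → Prop} (h : PrimrecPred p) : Sig p :=
  ⟨fun x => p x.1, h.comp Primrec.fst, fun a => by simp⟩

theorem Sig.comp {p : β → Prop} (h : Sig p) {f : α → β} (hf : Primrec f) :
    Sig fun a => p (f a) := by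
  obtain ⟨r, h1, h2⟩ := h
  exact ⟨fun x => r (f x.1, x.2), h1.comp ((hf.comp Primrec.fst).pair Primrec.snd),
    fun a => h2 _⟩

theorem Sig.or {p q : α → Prop} (hp : Sig p) (hq : Sig q) : Sig fun a => p a ∨ q a := by
  obtain ⟨r, h1, h2⟩ := hp
  obtain ⟨r', h1', h2'⟩ := hq
  exact ⟨fun x => r x ∨ r' x, h1.or h1', fun a => by simp only [h2, h2', exists_or]⟩

theorem Sig.and {p q : α → Prop} (hp : Sig p) (hq : Sig q) : Sig fun a => p a ∧ q a := by
  obtain ⟨r, h1, h2⟩ := hp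
  obtain ⟨r', h1', h2'⟩ := hq
  refine ⟨fun x => r (x.1, x.2.unpair.1) ∧ r' (x.1, x.2.unpair.2), ?_, ?_⟩
  · have hu := Primrec.unpair.comp (Primrec.snd (α := α) (β := ℕ))
    exact (h1.comp (Primrec.fst.pair (Primrec.fst.comp hu))).and
      (h1'.comp (Primrec.fst.pair (Primrec.snd.comp hu)))
  · intro a
    simp only [h2, h2']
    constructor
    · rintro ⟨⟨k, hk⟩, l, hl⟩
      exact ⟨Nat.pair k l, by simpa using ⟨hk, hl⟩⟩
    · rintro ⟨k, hk, hl⟩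
      exact ⟨⟨_, hk⟩, _, hl⟩

theorem PrimrecPred.bind_decode {q : α × β → Prop} (hq : PrimrecPred q) :
    PrimrecPred fun x : α × ℕ => ∃ b, Encodable.decode (α := β) x.2 = some b ∧ q (x.1, b) := by
  obtain ⟨d, hd⟩ := hq
  have h1 : Primrec fun x : α × ℕ => Option.map (fun b => decide (q (x.1, b)))
      (Encodable.decode (α := β) x.2) :=
    Primrec.option_map (Primrec.decode.comp Primrec.snd)
      (hd.comp ((Primrec.fst.comp Primrec.fst).pair Primrec.snd)).to₂
  have h2 : PrimrecPred fun x : α × ℕ => Option.map (fun b => decide (q (x.1, b)))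
      (Encodable.decode (α := β) x.2) = some true :=
    Primrec.eq.comp h1 (Primrec.const _)
  refine h2.of_eq fun x => ?_
  simp

theorem Sig.ex {p : α × β → Prop} (hp : Sig p) : Sig fun a => ∃ b, p (a, b) := by
  obtain ⟨r, h1, h2⟩ := hp
  refine ⟨fun x => ∃ b, Encodable.decode (α := β) x.2.unpair.1 = some b ∧
    r ((x.1, b), x.2.unpair.2), ?_, ?_⟩
  · have h := PrimrecPred.bind_decode (α := α × ℕ) (β := β)
      (q := fun y => r ((y.1.1, y.2), y.1.2.unpair.2)) (h1.comp
        (((Primrec.fst.comp Primrec.fst).pair Primrec.snd).pair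
          (Primrec.snd.comp (Primrec.unpair.comp (Primrec.snd.comp Primrec.fst)))))
    exact h.comp (f := fun x : α × ℕ => (x, x.2.unpair.1))
      (Primrec.id.pair (Primrec.fst.comp (Primrec.unpair.comp Primrec.snd)))
  · intro a
    constructor
    · rintro ⟨b, hb⟩
      obtain ⟨k, hk⟩ := (h2 _).1 hb
      exact ⟨Nat.pair (Encodable.encode b) k, b, by simp, by simpa using hk⟩
    · rintro ⟨k, b, _, hb⟩
      exact ⟨b, (h2 _).2 ⟨_, hb⟩⟩

theorem dom_iff_evaln (c : Nat.Partrec.Code) (n : ℕ) :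
    (c.eval n).Dom ↔ ∃ k, (c.evaln k n).isSome := by
  rw [Part.dom_iff_mem]
  constructor
  · rintro ⟨y, hy⟩
    obtain ⟨k, hk⟩ := Nat.Partrec.Code.evaln_complete.1 hy
    exact ⟨k, Option.isSome_iff_exists.2 ⟨y, hk⟩⟩
  · rintro ⟨k, hk⟩
    obtain ⟨y, hy⟩ := Option.isSome_iff_exists.1 hk
    exact ⟨y, Nat.Partrec.Code.evaln_sound hy⟩

/-- stage `k` evaluation of machine `e` on `n` -/
def ev (e k n : ℕ) : Option ℕ := (Denumerable.ofNat Nat.Partrec.Code e).evaln k n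

theorem prim_ev {e k n : α → ℕ} (he : Primrec e) (hk : Primrec k) (hn : Primrec n) :
    Primrec fun a => ev (e a) (k a) (n a) :=
  Nat.Partrec.Code.primrec_evaln.comp
    ((hk.pair ((Primrec.ofNat Nat.Partrec.Code).comp he)).pair hn)

theorem wenum_iff (e n : ℕ) : WEnum e n ↔ ∃ k, (ev e k n).isSome = true := dom_iff_evaln _ _

theorem sig_wenum : Sig fun x : ℕ × ℕ => WEnum x.1 x.2 :=
  ⟨fun y => (ev y.1.1 y.2 y.1.2).isSome = true,
    Primrec.eq.comp (Primrec.option_isSome.comp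
      (prim_ev (Primrec.fst.comp Primrec.fst) Primrec.snd (Primrec.snd.comp Primrec.fst)))
      (Primrec.const _),
    fun _ => wenum_iff _ _⟩

theorem Sig.toCode {p : ℕ → Prop} (hp : Sig p) :
    ∃ c : Nat.Partrec.Code, ∀ n, (c.eval n).Dom ↔ p n := by
  obtain ⟨q, ⟨d, hq⟩, h2⟩ := hp
  have h : Partrec fun n : ℕ => Nat.rfind fun k => (Part.some (decide (q (n, k))) : Part Bool) :=
    Partrec.rfind (p := fun n k => (Part.some (decide (q (n, k))) : Part Bool)) hq.to_comp.partrec.to₂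
  obtain ⟨c, hc⟩ := Nat.Partrec.Code.exists_code.1 (Partrec.nat_iff.1 h)
  refine ⟨c, fun n => ?_⟩
  rw [hc, h2]
  rw [Part.dom_iff_mem]
  constructor
  · rintro ⟨k, hk⟩
    have := Nat.rfind_spec hk
    exact ⟨k, by simpa using this⟩
  · rintro ⟨k, hk⟩
    have : (Nat.rfind fun k => (Part.some (decide (q (n, k))) : Part Bool)).Dom :=
      Nat.rfind_dom.2 ⟨k, by simpa using hk, fun _ => trivial⟩
    exact Part.dom_iff_mem.1 this

theorem Sig.toWEnum {p : α → Prop} (hp : Sig p) :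
    ∃ e, ∀ a, WEnum e (Encodable.encode a) ↔ p a := by
  have : Sig fun n : ℕ => ∃ a : α, n = Encodable.encode a ∧ p a :=
    Sig.ex (p := fun x : ℕ × α => x.1 = Encodable.encode x.2 ∧ p x.2)
      ((Sig.prim (Primrec.eq.comp Primrec.fst (Primrec.encode.comp Primrec.snd))).and
        (hp.comp Primrec.snd))
  obtain ⟨c, hc⟩ := this.toCode
  refine ⟨Encodable.encode c, fun a => ?_⟩
  unfold WEnum
  rw [Denumerable.ofNat_encode, hc]
  simp

theorem Sig.toOracle {p : List Bool × ℕ × ℕ → Prop} (hp : Sig p) :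
    ∃ e, ∀ (X : ℕ → Bool) n m, OracleComputes e X n m ↔ ∃ σ, IsPrefixOf σ X ∧ p (σ, n, m) := by
  obtain ⟨e, he⟩ := hp.toWEnum
  refine ⟨e, fun X n m => exists_congr fun σ => and_congr_right fun _ => ?_⟩
  exact he (σ, n, m)

theorem isPrefixOf_empty (σ : List Bool) : IsPrefixOf σ emptyOracle ↔ ∀ b ∈ σ, b = false := by
  simp only [IsPrefixOf, emptyOracle]
  constructor
  · intro h b hb
    obtain ⟨i, rfl⟩ := List.get_of_mem hb
    exact (h i).symm
  · intro h i
    exact (h _ (List.get_mem _ _)).symm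

theorem sig_of_ceStr {S : Set (List Bool)} (h : CeStrIn emptyOracle S) : Sig fun s => s ∈ S := by
  obtain ⟨e, he⟩ := h
  have h1 : Sig fun y : (List Bool × ℕ) × List Bool => (∀ b ∈ y.2, b = false) ∧
      WEnum e (Nat.pair (Encodable.encode y.2) (Nat.pair (Encodable.encode y.1.1) y.1.2)) := by
    refine (Sig.prim ?_).and ?_
    · exact pp_forall_mem Primrec.snd (Primrec.eq.comp Primrec.snd (Primrec.const _))
    · exact sig_wenum.comp ((Primrec.const e).pair
        (Primrec₂.natPair.comp (Primrec.encode.comp Primrec.snd)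
          (Primrec₂.natPair.comp (Primrec.encode.comp (Primrec.fst.comp Primrec.fst))
            (Primrec.snd.comp Primrec.fst))))
  refine h1.ex.ex.of_eq fun s => ?_
  rw [he]
  simp [OracleComputes, isPrefixOf_empty]

/-- `{x | p x}` many-one reduces to `∅′` -/
theorem Sig.toJump {p : α → Prop} (hp : Sig p) :
    ∃ h : α → ℕ, Primrec h ∧ ∀ a, zeroJump (h a) = true ↔ p a := by
  have : Sig fun n : ℕ => ∃ a : α, n.unpair.1 = Encodable.encode a ∧ p a :=
    Sig.ex (p := fun x : ℕ × α => x.1.unpair.1 = Encodable.encode x.2 ∧ p x.2)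
      ((Sig.prim (Primrec.eq.comp (Primrec.fst.comp (Primrec.unpair.comp Primrec.fst))
        (Primrec.encode.comp Primrec.snd))).and (hp.comp Primrec.snd))
  obtain ⟨c, hc⟩ := this.toCode
  refine ⟨fun a => Encodable.encode (c.curry (Encodable.encode a)),
    Primrec.encode.comp (Nat.Partrec.Code.primrec₂_curry.comp (Primrec.const c) Primrec.encode),
    fun a => ?_⟩
  have key : ∀ x, WEnum (Encodable.encode (c.curry (Encodable.encode a))) x ↔ p a := by
    intro x
    unfold WEnum
    rw [Denumerable.ofNat_encode, Nat.Partrec.Code.eval_curry, hc]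
    simp
  unfold zeroJump jump
  refine Iff.trans (@decide_eq_true_iff _ (Classical.propDecidable _)) ?_
  simp only [OracleComputes, key]
  constructor
  · rintro ⟨_, _, _, h⟩; exact h
  · intro h; exact ⟨0, [], isPrefixOf_nil _, h⟩

end sig



/-- all binary strings of length `t` -/
def allStr (t : ℕ) : List (List Bool) :=
  t.rec [[]] (fun _ L => L.flatMap fun v => [false :: v, true :: v])

theorem mem_allStr (t : ℕ) (v : List Bool) : v ∈ allStr t ↔ v.length = t := by
  induction t generalizing v with
  | zero => simp [allStr]
  | succ t ih =>
    change v ∈ (allStr t).flatMap _ ↔ _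
    rw [List.mem_flatMap]
    constructor
    · rintro ⟨u, hu, hv⟩
      rw [ih] at hu
      simp only [List.mem_cons, List.not_mem_nil, or_false] at hv
      rcases hv with rfl | rfl <;> simp [hu]
    · intro h
      cases v with
      | nil => simp at h
      | cons b v =>
        refine ⟨v, (ih v).2 (by simpa using h), ?_⟩
        cases b <;> simp

theorem nodup_allStr (t : ℕ) : (allStr t).Nodup := by
  induction t with
  | zero => simp [allStr]
  | succ t ih =>
    change ((allStr t).flatMap _).Nodup
    rw [List.nodup_flatMap]
    refine ⟨fun v _ => by simp, ih.imp ?_⟩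
    intro a b hab
    simp [Function.onFun, Ne.symm hab]

theorem prim_allStr : Primrec allStr := by
  refine Primrec.nat_rec₁ (f := fun _ (L : List (List Bool)) => L.flatMap fun v => [false :: v, true :: v]) _ ?_
  refine (Primrec.list_flatMap Primrec.snd ?_)
  have h1 : ∀ b : Bool, Primrec fun x : (ℕ × List (List Bool)) × List Bool => b :: x.2 :=
    fun b => Primrec.list_cons.comp (Primrec.const b) Primrec.snd
  exact Primrec.list_cons.comp (h1 false)
    (Primrec.list_cons.comp (h1 true) (Primrec.const []))

set_option linter.unusedSectionVars false

section
variable {α : Type} [Primcodable α]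

/-- no prefix of `u` enumerated by stage `t` -/
def okStr (q : (α × List Bool) × ℕ → Prop) (p : α) (t : ℕ) (u : List Bool) : Prop :=
  ∀ l < u.length + 1, ∀ k < t, ¬ q ((p, u.take l), k)

theorem okStr_mono {q : (α × List Bool) × ℕ → Prop} {p : α} {t t' : ℕ} {u u' : List Bool}
    (ht : t ≤ t') (hu : u <+: u') (h : okStr q p t' u') : okStr q p t u := by
  intro l hl k hk
  have h1 : u.take l = u'.take l := by
    obtain ⟨w, rfl⟩ := hu
    rw [List.take_append_of_le_length (by omega)]
  rw [h1]
  exact h l (by have := hu.length_le; omega) k (by omega)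

theorem prim_okStr {q : (α × List Bool) × ℕ → Prop} (hq : PrimrecPred q) :
    PrimrecPred fun x : α × ℕ × List Bool => okStr q x.1 x.2.1 x.2.2 := by
  unfold okStr
  refine pp_forall_lt (f := fun x : α × ℕ × List Bool => x.2.2.length + 1)
    (q := fun x l => ∀ k < x.2.1, ¬ q ((x.1, x.2.2.take l), k)) ?_ ?_
  · exact Primrec.succ.comp (Primrec.list_length.comp (Primrec.snd.comp Primrec.snd))
  · refine pp_forall_lt (f := fun y : (α × ℕ × List Bool) × ℕ => y.1.2.1)
      (q := fun y k => ¬ q ((y.1.1, y.1.2.2.take y.2), k)) ?_ ?_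
    · exact Primrec.fst.comp (Primrec.snd.comp Primrec.fst)
    · refine PrimrecPred.not (hq.comp (Primrec.pair (Primrec.pair ?_ ?_) Primrec.snd))
      · exact Primrec.fst.comp (Primrec.fst.comp Primrec.fst)
      · exact Primrec.list_take.comp (Primrec.snd.comp Primrec.fst)
          (Primrec.snd.comp (Primrec.snd.comp (Primrec.fst.comp Primrec.fst)))

open Classical in
/-- the surviving extensions -/
noncomputable def surv (q : (α × List Bool) × ℕ → Prop) (p : α) (ρ : List Bool) (t : ℕ) :
    List (List Bool) :=
  (allStr t).filter (fun v => okStr q p t (ρ ++ v))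

theorem prim_surv {q : (α × List Bool) × ℕ → Prop} (hq : PrimrecPred q) :
    Primrec fun x : α × List Bool × ℕ => surv q x.1 x.2.1 x.2.2 := by
  classical
  have h : PrimrecRel fun (v : List Bool) (x : α × List Bool × ℕ) =>
      okStr q x.1 x.2.2 (x.2.1 ++ v) := by
    refine (prim_okStr hq).comp (f := fun y : List Bool × α × List Bool × ℕ =>
      (y.2.1, y.2.2.2, y.2.2.1 ++ y.1)) ?_
    refine (Primrec.fst.comp Primrec.snd).pair
      ((Primrec.snd.comp (Primrec.snd.comp Primrec.snd)).pair ?_)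
    exact Primrec.list_append.comp (Primrec.fst.comp (Primrec.snd.comp Primrec.snd)) Primrec.fst
  have h2 := (PrimrecRel.listFilter h).comp
    (prim_allStr.comp (Primrec.snd.comp (Primrec.snd (α := α) (β := List Bool × ℕ)))) Primrec.id
  refine h2.of_eq fun x => ?_
  simp only [surv, id]

/-- stage `t` clopen approximation inside `[ρ]` -/
def survSet (q : (α × List Bool) × ℕ → Prop) (p : α) (ρ : List Bool) (t : ℕ) :
    Set (ℕ → Bool) :=
  {X | IsPrefixOf ρ X ∧ okStr q p t (strPrefix X (ρ.length + t))}

theorem survSet_eq (q : (α × List Bool) × ℕ → Prop) (p : α) (ρ : List Bool) (t : ℕ) :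
    survSet q p ρ t = ⋃ v ∈ (surv q p ρ t).toFinset, _root_.cylinder (ρ ++ v) := by
  classical
  ext X
  simp only [survSet, Set.mem_ofPred_eq, Set.mem_iUnion, List.mem_toFinset, surv, List.mem_filter,
    mem_allStr, decide_eq_true_eq, mem_cyl, exists_prop]
  constructor
  · rintro ⟨h1, h2⟩
    have h3 : ρ <+: strPrefix X (ρ.length + t) :=
      prefix_of_isPrefixOf h1 (isPrefixOf_strPrefix _ _) (by simp [strPrefix_length])
    obtain ⟨v, hv⟩ := h3
    refine ⟨v, ⟨?_, ?_⟩, ?_⟩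
    · have := congrArg List.length hv
      simpa [strPrefix_length] using this
    · rwa [hv]
    · rw [hv]; exact isPrefixOf_strPrefix _ _
  · rintro ⟨v, ⟨h1, h2⟩, h3⟩
    refine ⟨isPrefixOf_mono (List.prefix_append _ _) h3, ?_⟩
    rw [isPrefixOf_iff, List.length_append, h1] at h3
    rwa [h3]

theorem mu_survSet (q : (α × List Bool) × ℕ → Prop) (p : α) (ρ : List Bool) (t : ℕ) :
    μCantor (survSet q p ρ t) * 2 ^ ρ.length = (surv q p ρ t).length * 2⁻¹ ^ t := by
  classical
  rw [survSet_eq, measure_biUnion_finset]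
  · have hl : ∀ v ∈ (surv q p ρ t).toFinset, μCantor (_root_.cylinder (ρ ++ v)) =
        2⁻¹ ^ (ρ.length + t) := by
      intro v hv
      simp only [List.mem_toFinset, surv, List.mem_filter, mem_allStr] at hv
      rw [mu_cylinder, List.length_append, hv.1]
    rw [Finset.sum_congr rfl hl, Finset.sum_const, List.toFinset_card_of_nodup
      (show (surv q p ρ t).Nodup from (nodup_allStr t).filter _), nsmul_eq_mul, pow_add, mul_assoc]
    congr 1
    rw [mul_right_comm, ← mul_pow, ENNReal.inv_mul_cancel (by simp) (by simp)]
    simp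
  · intro v hv w hw hvw
    simp only [Finset.mem_coe, List.mem_toFinset, surv, List.mem_filter, mem_allStr] at hv hw
    apply disjoint_cylinder
    · intro h
      rw [List.prefix_append_right_inj] at h
      exact hvw (h.eq_of_length (by omega))
    · intro h
      rw [List.prefix_append_right_inj] at h
      exact hvw (h.eq_of_length (by omega)).symm
  · intro v _; exact measurableSet_cylinder _

theorem survSet_iInter {q : (α × List Bool) × ℕ → Prop} {T : α × List Bool → Prop}
    (hq : ∀ x, T x ↔ ∃ k, q (x, k)) (p : α) (ρ : List Bool) :
    ⋂ t, survSet q p ρ t = _root_.cylinder ρ ∩ (openOf {s | T (p, s)})ᶜ := by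
  ext X
  simp only [Set.mem_iInter, Set.mem_inter_iff, mem_cyl, Set.mem_compl_iff, mem_openOf,
    Set.mem_ofPred_eq, survSet]
  constructor
  · intro h
    refine ⟨(h 0).1, ?_⟩
    rintro ⟨s, hs, hsX⟩
    obtain ⟨k, hk⟩ := (hq _).1 hs
    have := (h (s.length + k + 1)).2 s.length (by simp [strPrefix_length]; omega) k (by omega)
    rw [strPrefix_take X (by omega), (isPrefixOf_iff _ _).1 hsX] at this
    exact this hk
  · rintro ⟨h1, h2⟩ t
    refine ⟨h1, ?_⟩
    intro l hl k _ hqk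
    refine h2 ⟨_, (hq _).2 ⟨k, hqk⟩, isPrefixOf_mono (take_pre _ _)
      (isPrefixOf_strPrefix _ _)⟩

theorem sig_dens {T : α × List Bool → Prop} (hT : Sig T) :
    Sig fun x : α × List Bool × ℕ × ℕ =>
      dens x.2.1 (openOf {s | T (x.1, s)})ᶜ * (x.2.2.2 : ℝ≥0∞) < (x.2.2.1 : ℝ≥0∞) := by
  obtain ⟨q, hq, hqT⟩ := hT
  refine ⟨fun y => (surv q y.1.1 y.1.2.1 y.2).length * y.1.2.2.2 < y.1.2.2.1 * 2 ^ y.2, ?_, ?_⟩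
  · refine Primrec.nat_lt.comp (Primrec.nat_mul.comp (Primrec.list_length.comp
      ((prim_surv hq).comp (g := fun y : (α × List Bool × ℕ × ℕ) × ℕ => (y.1.1, y.1.2.1, y.2)) ?_))
        ?_) (Primrec.nat_mul.comp ?_ ?_)
    · exact (Primrec.fst.comp Primrec.fst).pair
        ((Primrec.fst.comp (Primrec.snd.comp Primrec.fst)).pair Primrec.snd)
    · exact Primrec.snd.comp (Primrec.snd.comp (Primrec.snd.comp Primrec.fst))
    · exact Primrec.fst.comp (Primrec.snd.comp (Primrec.snd.comp Primrec.fst))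
    · exact prim_pow.comp (Primrec.const 2) Primrec.snd
  · rintro ⟨p, ρ, a, d⟩
    dsimp only
    have hstage : ∀ t, μCantor (survSet q p ρ t) * 2 ^ ρ.length * d < a ↔
        (surv q p ρ t).length * d < a * 2 ^ t := by
      intro t
      rw [mu_survSet, mul_right_comm, ← ENNReal.inv_pow, ← div_eq_mul_inv,
        ENNReal.div_lt_iff (by simp) (by simp)]
      exact_mod_cast Iff.rfl
    simp only [← hstage]
    have hdens : dens ρ (openOf {s | T (p, s)})ᶜ = μCantor (⋂ t, survSet q p ρ t) * 2 ^ ρ.length :=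
      by rw [survSet_iInter hqT, dens]
    rw [hdens]
    constructor
    · intro h
      have hanti : Antitone (survSet q p ρ) := by
        intro t t' htt X hX
        exact ⟨hX.1, okStr_mono htt (strPrefix_le X (by omega)) hX.2⟩
      have hm : ∀ t, NullMeasurableSet (survSet q p ρ t) μCantor := by
        intro t
        rw [survSet_eq]
        exact (Finset.measurableSet_biUnion _
          (fun v _ => measurableSet_cylinder _)).nullMeasurableSet
      have h1 := tendsto_measure_iInter_atTop hm hanti ⟨0, measure_ne_top _ _⟩
      have h2 := ENNReal.Tendsto.mul_const (ENNReal.Tendsto.mul_const h1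
        (b := (2:ℝ≥0∞) ^ ρ.length) (Or.inr (by simp))) (b := (d : ℝ≥0∞)) (Or.inr (by simp))
      exact (h2.eventually (gt_mem_nhds h)).exists
    · rintro ⟨t, ht⟩
      refine lt_of_le_of_lt ?_ ht
      gcongr
      exact Set.iInter_subset _ t
end



/-- `L`-bit binary expansion of `k` -/
def bitsOf (k L : ℕ) : List Bool := (List.range L).map fun j => decide (k / 2 ^ (L - 1 - j) % 2 = 1)

theorem bitsOf_length (k L : ℕ) : (bitsOf k L).length = L := by simp [bitsOf]

theorem bitsOf_succ (k L : ℕ) : bitsOf k (L + 1) = bitsOf (k / 2) L ++ [decide (k % 2 = 1)] := by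
  simp only [bitsOf, List.range_succ, List.map_append, List.map_cons, List.map_nil]
  congr 1
  · apply List.map_congr_left
    intro j hj
    rw [List.mem_range] at hj
    have : L + 1 - 1 - j = (L - 1 - j) + 1 := by omega
    rw [this, pow_succ, mul_comm, ← Nat.div_div_eq_div_mul]
  · simp

theorem bval_bitsOf (k L : ℕ) (h : k < 2 ^ L) : bval (bitsOf k L) = k := by
  induction L generalizing k with
  | zero => simp at h; subst h; simp [bitsOf, bval]
  | succ L ih =>
    rw [bitsOf_succ, bval_append, ih _ (by rw [pow_succ] at h; omega)]
    rcases Nat.mod_two_eq_zero_or_one k with h0 | h0 <;> simp [h0, natOfBool] <;> omega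

theorem bval_append' (σ v : List Bool) : bval σ = bval (σ ++ v) / 2 ^ v.length := by
  induction v using List.reverseRecOn with
  | nil => simp
  | append_singleton v b ih =>
    rw [← List.append_assoc, bval_append, List.length_append, List.length_singleton, pow_succ,
      mul_comm (2 ^ v.length), ← Nat.div_div_eq_div_mul]
    have : (2 * bval (σ ++ v) + natOfBool b) / 2 = bval (σ ++ v) := by
      cases b <;> simp [natOfBool] <;> omega
    rw [this, ← ih]

theorem bitsOf_pre {k L k' L' : ℕ} (hk : k < 2 ^ L) (hk' : k' < 2 ^ L')
    (h : bitsOf k L <+: bitsOf k' L') :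
    (k : ℝ) / 2 ^ L ≤ k' / 2 ^ L' ∧ (k' : ℝ) / 2 ^ L' < (k + 1) / 2 ^ L := by
  obtain ⟨v, hv⟩ := h
  have hlen : L' = L + v.length := by
    have := congrArg List.length hv
    simpa [bitsOf_length] using this.symm
  have h1 := bval_append' (bitsOf k L) v
  rw [hv, bval_bitsOf _ _ hk, bval_bitsOf _ _ hk'] at h1
  have h2 : k * 2 ^ v.length ≤ k' := by rw [h1]; exact Nat.div_mul_le_self _ _
  have h3 : k' < (k + 1) * 2 ^ v.length := by
    rw [h1, ← Nat.div_lt_iff_lt_mul (by positivity)]; exact Nat.lt_succ_self _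
  rw [hlen, pow_add]
  have p1 : (0:ℝ) < 2 ^ L := by positivity
  have p2 : (0:ℝ) < 2 ^ v.length := by positivity
  have h2' : (k : ℝ) * 2 ^ v.length ≤ k' := by exact_mod_cast h2
  have h3' : (k' : ℝ) < (k + 1) * 2 ^ v.length := by exact_mod_cast h3
  constructor
  · rw [div_le_div_iff₀ p1 (by positivity)]
    nlinarith
  · rw [div_lt_div_iff₀ (by positivity) p1]
    nlinarith

/-- weight of a request -/
noncomputable def rwt : Option (ℕ × ℕ) → ℝ≥0∞
  | none => 0
  | some x => 2⁻¹ ^ x.1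

/-- accumulated weight as a fraction -/
def accF (req : ℕ → Option (ℕ × ℕ)) (t : ℕ) : ℕ × ℕ :=
  t.rec (0, 1) fun t a => Option.casesOn (req t) a fun x => (a.1 * 2 ^ x.1 + a.2, a.2 * 2 ^ x.1)

theorem accF_none {req : ℕ → Option (ℕ × ℕ)} {t : ℕ} (h : req t = none) :
    accF req (t+1) = accF req t := by
  have : accF req (t+1) = Option.casesOn (motive := fun _ => ℕ × ℕ) (req t) (accF req t)
      fun x => ((accF req t).1 * 2 ^ x.1 + (accF req t).2, (accF req t).2 * 2 ^ x.1) := rfl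
  rw [this, h]

theorem accF_some {req : ℕ → Option (ℕ × ℕ)} {t : ℕ} {x : ℕ × ℕ} (h : req t = some x) :
    accF req (t+1) =
      ((accF req t).1 * 2 ^ x.1 + (accF req t).2, (accF req t).2 * 2 ^ x.1) := by
  have : accF req (t+1) = Option.casesOn (motive := fun _ => ℕ × ℕ) (req t) (accF req t)
      fun x => ((accF req t).1 * 2 ^ x.1 + (accF req t).2, (accF req t).2 * 2 ^ x.1) := rfl
  rw [this, h]

theorem accF_pos (req : ℕ → Option (ℕ × ℕ)) (t : ℕ) : 0 < (accF req t).2 := by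
  induction t with
  | zero => simp [accF]
  | succ t ih =>
    cases h : req t with
    | none => rwa [accF_none h]
    | some x => rw [accF_some h]; positivity

theorem accF_sum (req : ℕ → Option (ℕ × ℕ)) (t : ℕ) :
    ((accF req t).1 : ℝ) / (accF req t).2 = ∑ s ∈ Finset.range t, (rwt (req s)).toReal := by
  induction t with
  | zero => simp [accF]
  | succ t ih =>
    rw [Finset.sum_range_succ, ← ih]
    have hp : (0:ℝ) < (accF req t).2 := by exact_mod_cast accF_pos req t
    cases h : req t with
    | none => rw [accF_none h]; simp [rwt]
    | some x =>
      rw [accF_some h]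
      simp only [rwt, Nat.cast_add, Nat.cast_mul, Nat.cast_pow, Nat.cast_ofNat, toReal_pow,
        toReal_inv, toReal_ofNat, inv_pow]
      field_simp

/-- the position of the `t`-th request -/
def posK (req : ℕ → Option (ℕ × ℕ)) (t w : ℕ) : ℕ :=
  ((accF req t).1 * 2 ^ (w + 1) + ((accF req t).2 - 1)) / (accF req t).2

theorem posK_bounds (req : ℕ → Option (ℕ × ℕ)) (t w : ℕ) :
    (∑ s ∈ Finset.range t, (rwt (req s)).toReal) ≤ (posK req t w : ℝ) / 2 ^ (w + 1) ∧
    ((posK req t w : ℝ) + 1) / 2 ^ (w + 1) <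
      (∑ s ∈ Finset.range t, (rwt (req s)).toReal) + 2⁻¹ ^ w := by
  rw [← accF_sum]
  have hp := accF_pos req t
  set N := (accF req t).1
  set D := (accF req t).2
  have h1 : posK req t w * D ≤ N * 2 ^ (w + 1) + (D - 1) := Nat.div_mul_le_self _ _
  have h2 : N * 2 ^ (w + 1) + (D - 1) < (posK req t w + 1) * D :=
    (Nat.div_lt_iff_lt_mul hp).1 (Nat.lt_succ_self _)
  have h1' : posK req t w * D + 1 ≤ N * 2 ^ (w + 1) + D := by omega
  have h2' : N * 2 ^ (w + 1) ≤ posK req t w * D := by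
    have : (posK req t w + 1) * D = posK req t w * D + D := by ring
    omega
  have g1 : (posK req t w : ℝ) * D + 1 ≤ N * 2 ^ (w + 1) + D := by exact_mod_cast h1'
  have g2 : (N : ℝ) * 2 ^ (w + 1) ≤ posK req t w * D := by exact_mod_cast h2'
  have hD : (0:ℝ) < D := by exact_mod_cast hp
  constructor
  · rw [div_le_div_iff₀ hD (by positivity)]; exact g2
  · have : (N : ℝ) / D + 2⁻¹ ^ w = (N * 2 ^ (w + 1) + 2 * D) / (D * 2 ^ (w + 1)) := by
      rw [pow_succ, inv_pow]; field_simp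
    rw [this, div_lt_div_iff₀ (by positivity) (by positivity)]
    have p : (0:ℝ) < 2 ^ (w + 1) := by positivity
    have : ((posK req t w : ℝ) + 1) * D < N * 2 ^ (w + 1) + 2 * D := by nlinarith
    nlinarith

theorem prim_posK {req : ℕ → Option (ℕ × ℕ)} (h : Primrec req) :
    Primrec fun x : ℕ × ℕ => posK req x.1 x.2 := by
  have hacc : Primrec (accF req) := by
    refine Primrec.nat_rec₁ (α := ℕ × ℕ) (f := fun t a => Option.casesOn (req t) a
      fun x => (a.1 * 2 ^ x.1 + a.2, a.2 * 2 ^ x.1)) _ ?_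
    refine Primrec.option_casesOn (h.comp Primrec.fst) Primrec.snd ?_
    have ha : Primrec fun y : (ℕ × ℕ × ℕ) × ℕ × ℕ => y.1.2 := Primrec.snd.comp Primrec.fst
    have hw : Primrec fun y : (ℕ × ℕ × ℕ) × ℕ × ℕ => 2 ^ y.2.1 :=
      prim_pow.comp (Primrec.const 2) (Primrec.fst.comp Primrec.snd)
    exact (Primrec.nat_add.comp (Primrec.nat_mul.comp (Primrec.fst.comp ha) hw)
      (Primrec.snd.comp ha)).pair (Primrec.nat_mul.comp (Primrec.snd.comp ha) hw)
  have ha := hacc.comp (Primrec.fst (α := ℕ) (β := ℕ))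
  exact Primrec.nat_div.comp (Primrec.nat_add.comp (Primrec.nat_mul.comp (Primrec.fst.comp ha)
    (prim_pow.comp (Primrec.const 2) (Primrec.succ.comp Primrec.snd)))
    (Primrec.nat_sub.comp (Primrec.snd.comp ha) (Primrec.const 1))) (Primrec.snd.comp ha)

theorem prim_bitsOf : Primrec₂ bitsOf := by
  refine Primrec.list_map (Primrec.list_range.comp Primrec.snd) ?_
  have hk : Primrec fun y : (ℕ × ℕ) × ℕ => y.1.1 := Primrec.fst.comp Primrec.fst
  have hL : Primrec fun y : (ℕ × ℕ) × ℕ => y.1.2 := Primrec.snd.comp Primrec.fst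
  exact PrimrecPred.decide (Primrec.eq.comp (Primrec.nat_mod.comp (Primrec.nat_div.comp hk
    (prim_pow.comp (Primrec.const 2) (Primrec.nat_sub.comp
      (Primrec.nat_sub.comp hL (Primrec.const 1)) Primrec.snd))) (Primrec.const 2))
      (Primrec.const 1))

/-- Kraft–Chaitin with one bit of slack. -/
theorem kraft_chaitin (req : ℕ → Option (ℕ × ℕ)) (hreq : Primrec req)
    (hsum : ∑' t, rwt (req t) ≤ 1) :
    ∃ e, PrefixFreeMachine e ∧ ∀ t w x, req t = some (w, x) → ∃ σ : List Bool,
      σ.length = w + 1 ∧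
        x ∈ (Denumerable.ofNat Nat.Partrec.Code e).eval (Encodable.encode σ) := by
  set S : ℕ → ℝ := fun t => ∑ s ∈ Finset.range t, (rwt (req s)).toReal with hS
  have hle1 : ∀ t, S t ≤ 1 := by
    intro t
    have h1 : ∀ s ∈ Finset.range t, rwt (req s) ≠ ⊤ := by
      intro s _
      cases req s <;> simp [rwt]
    rw [hS]; dsimp only
    rw [← ENNReal.toReal_sum h1]
    refine ENNReal.toReal_le_of_le_ofReal zero_le_one ?_
    rw [ENNReal.ofReal_one]
    exact (ENNReal.sum_le_tsum _).trans hsum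
  have hmono : Monotone S := by
    intro a b hab
    exact Finset.sum_le_sum_of_subset_of_nonneg (Finset.range_mono hab)
      (fun _ _ _ => ENNReal.toReal_nonneg)
  have hstep : ∀ t w x, req t = some (w, x) → S (t+1) = S t + 2⁻¹ ^ w := by
    intro t w x h
    simp [hS, Finset.sum_range_succ, h, rwt]
  have hlt : ∀ t w x, req t = some (w, x) → posK req t w < 2 ^ (w + 1) := by
    intro t w x h
    have h1 := (posK_bounds req t w).2
    have h2 : S t + 2⁻¹ ^ w ≤ 1 := by rw [← hstep t w x h]; exact hle1 _
    have h3 := lt_of_lt_of_le h1 h2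
    rw [div_lt_one (by positivity)] at h3
    have : ((posK req t w : ℕ) : ℝ) < ((2 ^ (w+1) : ℕ) : ℝ) := by push_cast; linarith
    exact_mod_cast this
  have hpf : ∀ t w x t' w' x', req t = some (w, x) → req t' = some (w', x') →
      bitsOf (posK req t w) (w + 1) <+: bitsOf (posK req t' w') (w' + 1) → t = t' := by
    intro t w x t' w' x' h h' hp
    obtain ⟨h1, h2⟩ := bitsOf_pre (hlt _ _ _ h) (hlt _ _ _ h') hp
    obtain ⟨a1, a2⟩ := posK_bounds req t w
    obtain ⟨b1, b2⟩ := posK_bounds req t' w'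
    change S t ≤ _ at a1
    change _ < S t + _ at a2
    change S t' ≤ _ at b1
    change _ < S t' + _ at b2
    rw [← hstep _ _ _ h] at a2
    rw [← hstep _ _ _ h'] at b2
    have b3 : (posK req t' w' : ℝ) / 2 ^ (w'+1) < S (t'+1) := by
      refine lt_of_le_of_lt ?_ b2
      gcongr; linarith
    rcases lt_trichotomy t t' with hl | hl | hl
    · have := hmono (show t + 1 ≤ t' from hl); linarith
    · exact hl
    · have := hmono (show t' + 1 ≤ t from hl); linarith
  let f : ℕ → ℕ → Option ℕ := fun n t => (req t).bind fun y =>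
    if Encodable.encode (bitsOf (posK req t y.1) (y.1 + 1)) = n then some y.2 else none
  have hf : Primrec₂ f := by
    refine Primrec.option_bind (hreq.comp Primrec.snd) ?_
    have hy1 : Primrec fun z : (ℕ × ℕ) × ℕ × ℕ => z.2.1 := Primrec.fst.comp Primrec.snd
    refine Primrec.ite (Primrec.eq.comp (Primrec.encode.comp (prim_bitsOf.comp
      ((prim_posK hreq).comp ((Primrec.snd.comp Primrec.fst).pair hy1)) (Primrec.succ.comp hy1)))
      (Primrec.fst.comp Primrec.fst)) (Primrec.option_some.comp (Primrec.snd.comp Primrec.snd))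
      (Primrec.const none)
  have hfm : ∀ n t y, y ∈ f n t ↔ ∃ w, req t = some (w, y) ∧
      Encodable.encode (bitsOf (posK req t w) (w + 1)) = n := by
    intro n t y
    simp only [f, Option.mem_def, Option.bind_eq_some_iff, Prod.exists]
    constructor
    · rintro ⟨w, x, h1, h2⟩
      split_ifs at h2 with h3
      cases h2
      exact ⟨w, h1, h3⟩
    · rintro ⟨w, h1, h2⟩
      exact ⟨w, y, h1, by rw [if_pos h2]⟩
  obtain ⟨c, hc⟩ := Nat.Partrec.Code.exists_code.1
    (Partrec.nat_iff.1 (Partrec.rfindOpt hf.to_comp))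
  refine ⟨Encodable.encode c, ?_, ?_⟩
  · have hdom : ∀ σ ∈ machineDom (Encodable.encode c), ∃ t w x, req t = some (w, x) ∧
        bitsOf (posK req t w) (w + 1) = σ := by
      intro σ hσ
      simp only [machineDom, Set.mem_ofPred_eq, Denumerable.ofNat_encode, hc,
        Nat.rfindOpt_dom, hfm] at hσ
      obtain ⟨t, y, w, h1, h2⟩ := hσ
      exact ⟨t, w, y, h1, Encodable.encode_inj.1 h2⟩
    intro σ hσ τ hτ hp
    obtain ⟨t, w, x, h1, rfl⟩ := hdom σ hσ
    obtain ⟨t', w', x', h1', rfl⟩ := hdom τ hτ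
    obtain rfl := hpf _ _ _ _ _ _ h1 h1' hp
    rw [h1] at h1'
    cases h1'
    rfl
  · intro t w x h
    refine ⟨bitsOf (posK req t w) (w + 1), bitsOf_length _ _, ?_⟩
    rw [Denumerable.ofNat_encode, hc]
    have hd : (Nat.rfindOpt (f (Encodable.encode (bitsOf (posK req t w) (w + 1))))).Dom :=
      Nat.rfindOpt_dom.2 ⟨t, x, (hfm _ _ _).2 ⟨w, h, rfl⟩⟩
    obtain ⟨y, hy⟩ := Part.dom_iff_mem.1 hd
    obtain ⟨t', ht'⟩ := Nat.rfindOpt_spec hy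
    obtain ⟨w', h1, h2⟩ := (hfm _ _ _).1 ht'
    have h3 := Encodable.encode_inj.1 h2
    obtain rfl := hpf _ _ _ _ _ _ h1 h (by rw [h3])
    rw [h] at h1
    cases h1
    exact hy

theorem K_nonempty (x : ℕ) : {k | ∃ e, ∃ σ : List Bool, PrefixFreeMachine e ∧
    x ∈ (Denumerable.ofNat Nat.Partrec.Code e).eval (Encodable.encode σ) ∧
    k = σ.length + 2 * e + 2}.Nonempty := by
  obtain ⟨e, h1, h2⟩ := kraft_chaitin (fun t => if t = 0 then some (0, x) else none)
    (Primrec.ite (Primrec.eq.comp Primrec.id (Primrec.const 0)) (Primrec.const _)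
      (Primrec.const _)) (by
      rw [tsum_eq_single 0]
      · simp [rwt]
      · intro t ht; simp [ht, rwt])
  obtain ⟨σ, _, h3⟩ := h2 0 0 x (by simp)
  exact ⟨_, e, σ, h1, h3, rfl⟩



theorem strPrefix_get (X : ℕ → Bool) {m N : ℕ} (h : m < N) : (strPrefix X N)[m]? = some (X m) := by
  simp [strPrefix, h]

theorem isPrefixOf_get {s : List Bool} {X : ℕ → Bool} (h : IsPrefixOf s X) {m : ℕ} {b : Bool}
    (hb : s[m]? = some b) : X m = b := by
  obtain ⟨h1, h2⟩ := List.getElem?_eq_some_iff.1 hb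
  rw [← h2]
  exact h ⟨m, h1⟩

/-- the string `s` has ones at the block `i` of width `w` -/
def hitB (i w : ℕ) (s : List Bool) : Prop := ∀ j < w, s[Nat.pair i j]? = some true

/-- the string `s` has a zero in the block `i` of width `w` -/
def missB (i w : ℕ) (s : List Bool) : Prop := ∃ j < w, s[Nat.pair i j]? = some false

theorem mem_blk_iff_hit (i w : ℕ) (X : ℕ → Bool) :
    X ∈ blk i w ↔ ∃ s, hitB i w s ∧ IsPrefixOf s X := by
  constructor
  · intro h
    refine ⟨strPrefix X (Nat.pair i w), fun j hj => ?_, isPrefixOf_strPrefix _ _⟩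
    rw [strPrefix_get X (Nat.pair_lt_pair_right i hj), h j hj]
  · rintro ⟨s, h1, h2⟩ j hj
    exact isPrefixOf_get h2 (h1 j hj)

theorem not_mem_blk_iff (i w : ℕ) (X : ℕ → Bool) :
    X ∉ blk i w ↔ ∃ s, missB i w s ∧ IsPrefixOf s X := by
  constructor
  · intro h
    simp only [blk, Set.mem_ofPred_eq, not_forall] at h
    obtain ⟨j, hj, h⟩ := h
    refine ⟨strPrefix X (Nat.pair i w), ⟨j, hj, ?_⟩, isPrefixOf_strPrefix _ _⟩
    rw [strPrefix_get X (Nat.pair_lt_pair_right i hj)]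
    simpa using h
  · rintro ⟨s, ⟨j, hj, h1⟩, h2⟩ h
    have := isPrefixOf_get h2 h1
    rw [h j hj] at this
    cases this

section
variable {α : Type} [Primcodable α]

theorem pp_hitB {i w : α → ℕ} {s : α → List Bool} (hi : Primrec i) (hw : Primrec w)
    (hs : Primrec s) : PrimrecPred fun a => hitB (i a) (w a) (s a) :=
  pp_forall_lt (q := fun a j => (s a)[Nat.pair (i a) j]? = some true) hw
    (Primrec.eq.comp (Primrec.list_getElem?.comp (hs.comp Primrec.fst)
      (Primrec₂.natPair.comp (hi.comp Primrec.fst) Primrec.snd)) (Primrec.const _))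

theorem pp_missB {i w : α → ℕ} {s : α → List Bool} (hi : Primrec i) (hw : Primrec w)
    (hs : Primrec s) : PrimrecPred fun a => missB (i a) (w a) (s a) :=
  pp_exists_lt (q := fun a j => (s a)[Nat.pair (i a) j]? = some false) hw
    (Primrec.eq.comp (Primrec.list_getElem?.comp (hs.comp Primrec.fst)
      (Primrec₂.natPair.comp (hi.comp Primrec.fst) Primrec.snd)) (Primrec.const _))
end

/-- two codes of strings violate prefix-freeness -/
def BadPair (n n' : ℕ) : Prop := ∃ σ' : List Bool, Encodable.decode n' = some σ' ∧
  ∃ σ : List Bool, Encodable.decode n = some σ ∧ σ <+: σ' ∧ σ ≠ σ'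

theorem pp_badPair : PrimrecPred fun x : ℕ × ℕ => BadPair x.1 x.2 := by
  have h1 : PrimrecPred fun x : List Bool × List Bool => x.2 <+: x.1 ∧ x.2 ≠ x.1 :=
    ((pp_pre (β := Bool)).comp (f := fun x : List Bool × List Bool => (x.2, x.1))
      (Primrec.snd.pair Primrec.fst)).and
      (PrimrecPred.not (Primrec.eq.comp Primrec.snd Primrec.fst))
  have h2 := PrimrecPred.bind_decode h1
  have h3 := h2.comp (f := fun x : ℕ × List Bool => (x.2, x.1)) (Primrec.snd.pair Primrec.fst)
  exact PrimrecPred.bind_decode h3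

/-- machine `e` looks prefix-free up to stage `k` -/
def GoodK (e k : ℕ) : Prop := ∀ n < k, ∀ n' < k, ¬ ((ev e k n).isSome = true ∧
  (ev e k n').isSome = true ∧ BadPair n n')

theorem pp_goodK : PrimrecPred fun x : ℕ × ℕ => GoodK x.1 x.2 := by
  unfold GoodK
  refine pp_forall_lt (q := fun x n => ∀ n' < x.2, ¬ ((ev x.1 x.2 n).isSome = true ∧
    (ev x.1 x.2 n').isSome = true ∧ BadPair n n')) Primrec.snd ?_
  refine pp_forall_lt (q := fun (y : (ℕ × ℕ) × ℕ) n' => ¬ ((ev y.1.1 y.1.2 y.2).isSome = true ∧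
    (ev y.1.1 y.1.2 n').isSome = true ∧ BadPair y.2 n')) (Primrec.snd.comp Primrec.fst) ?_
  have a1 : Primrec fun z : ((ℕ × ℕ) × ℕ) × ℕ => z.1.1.1 :=
    Primrec.fst.comp (Primrec.fst.comp Primrec.fst)
  have a2 : Primrec fun z : ((ℕ × ℕ) × ℕ) × ℕ => z.1.1.2 :=
    Primrec.snd.comp (Primrec.fst.comp Primrec.fst)
  have a3 : Primrec fun z : ((ℕ × ℕ) × ℕ) × ℕ => z.1.2 :=
    Primrec.snd.comp Primrec.fst
  refine PrimrecPred.not (PrimrecPred.and ?_ (PrimrecPred.and ?_ ?_))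
  · exact Primrec.eq.comp (Primrec.option_isSome.comp (prim_ev a1 a2 a3)) (Primrec.const _)
  · exact Primrec.eq.comp (Primrec.option_isSome.comp (prim_ev a1 a2 Primrec.snd))
      (Primrec.const _)
  · exact pp_badPair.comp (f := fun z : ((ℕ × ℕ) × ℕ) × ℕ => (z.1.2, z.2)) (a3.pair Primrec.snd)

/-- machine `e` outputs `y` on `σ`, filtered to be prefix-free -/
def AccO (e : ℕ) (σ : List Bool) (y : ℕ) : Prop :=
  ∃ k, GoodK e k ∧ ev e k (Encodable.encode σ) = some y

theorem sig_accO : Sig fun x : ℕ × List Bool × ℕ => AccO x.1 x.2.1 x.2.2 := by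
  refine ⟨fun z => GoodK z.1.1 z.2 ∧ ev z.1.1 z.2 (Encodable.encode z.1.2.1) = some z.1.2.2,
    ?_, fun a => Iff.rfl⟩
  have a1 : Primrec fun z : (ℕ × List Bool × ℕ) × ℕ => z.1.1 := Primrec.fst.comp Primrec.fst
  have a2 : Primrec fun z : (ℕ × List Bool × ℕ) × ℕ => z.1.2.1 :=
    Primrec.fst.comp (Primrec.snd.comp Primrec.fst)
  have a3 : Primrec fun z : (ℕ × List Bool × ℕ) × ℕ => z.1.2.2 :=
    Primrec.snd.comp (Primrec.snd.comp Primrec.fst)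
  exact (pp_goodK.comp (f := fun z : (ℕ × List Bool × ℕ) × ℕ => (z.1.1, z.2))
    (a1.pair Primrec.snd)).and (Primrec.eq.comp
      (prim_ev a1 Primrec.snd (Primrec.encode.comp a2)) (Primrec.option_some.comp a3))

theorem ev_mono {e k k' n y : ℕ} (h : k ≤ k') (hy : ev e k n = some y) : ev e k' n = some y :=
  Nat.Partrec.Code.evaln_mono h hy

theorem ev_lt {e k n y : ℕ} (hy : ev e k n = some y) : n < k :=
  Nat.Partrec.Code.evaln_bound hy

theorem accO_unique {e σ y y'} (h : AccO e σ y) (h' : AccO e σ y') : y = y' := by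
  obtain ⟨k, _, h⟩ := h
  obtain ⟨k', _, h'⟩ := h'
  have a := ev_mono (le_max_left k k') h
  have b := ev_mono (le_max_right k k') h'
  rw [a] at b
  exact Option.some.inj b

theorem accO_prefixFree (e : ℕ) : PrefixFreeSet {σ | ∃ y, AccO e σ y} := by
  rintro σ ⟨y, k, hg, h⟩ σ' ⟨y', k', hg', h'⟩ hp
  by_contra hne
  have main : ∀ m, GoodK e m → k ≤ m → k' ≤ m → False := by
    intro m hm h1 h2
    have a := ev_mono h1 h
    have b := ev_mono h2 h'
    exact hm _ (ev_lt a) _ (ev_lt b) ⟨by rw [a]; rfl, by rw [b]; rfl,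
      σ', Encodable.encodek _, σ, Encodable.encodek _, hp, hne⟩
  rcases le_total k k' with hk | hk
  · exact main k' hg' hk le_rfl
  · exact main k hg le_rfl hk

theorem encode_of_decode {n : ℕ} {σ : List Bool} (h : Encodable.decode n = some σ) :
    Encodable.encode σ = n := by
  induction σ generalizing n with
  | nil =>
    cases n with
    | zero => rfl
    | succ v =>
      rw [← Nat.succ_eq_add_one, Encodable.decode_list_succ] at h
      cases h1 : Encodable.decode (α := Bool) v.unpair.1 <;>
      cases h2 : Encodable.decode (α := List Bool) v.unpair.2 <;> simp [h1, h2, Seq.seq] at h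
  | cons b l ih =>
    cases n with
    | zero => simp at h
    | succ v =>
      rw [← Nat.succ_eq_add_one, Encodable.decode_list_succ] at h
      cases h1 : Encodable.decode (α := Bool) v.unpair.1 with
      | none => simp [h1, Seq.seq] at h
      | some b' =>
        cases h2 : Encodable.decode (α := List Bool) v.unpair.2 with
        | none => simp [h1, h2, Seq.seq] at h
        | some l' =>
          simp [h1, h2, Seq.seq] at h
          obtain ⟨rfl, rfl⟩ := h
          rw [Encodable.encode_list_cons, ih h2]
          have hb : Encodable.encode b' = v.unpair.1 := by
            generalize v.unpair.1 = u at h1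
            match u, h1 with
            | 0, h1 => simp at h1; rw [h1]; rfl
            | 1, h1 => simp at h1; rw [h1]; rfl
            | u + 2, h1 => rw [Encodable.decode_ge_two _ (by omega)] at h1; cases h1
          rw [hb, Nat.pair_unpair]

theorem accO_of_prefixFree {e : ℕ} (he : PrefixFreeMachine e) {σ : List Bool} {y : ℕ}
    (h : y ∈ (Denumerable.ofNat Nat.Partrec.Code e).eval (Encodable.encode σ)) : AccO e σ y := by
  obtain ⟨k, hk⟩ := Nat.Partrec.Code.evaln_complete.1 h
  refine ⟨k, ?_, hk⟩
  rintro n _ n' _ ⟨h1, h2, σ', hσ', σ, hσ, hp, hne⟩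
  have key : ∀ (n : ℕ) (σ : List Bool), Encodable.decode n = some σ →
      (ev e k n).isSome = true → Encodable.encode σ = n → σ ∈ machineDom e := by
    intro n σ _ h2 h3
    rw [machineDom, Set.mem_ofPred_eq, h3, dom_iff_evaln]
    exact ⟨k, h2⟩
  have enc : ∀ (n : ℕ) (σ : List Bool), Encodable.decode n = some σ →
      Encodable.encode σ = n := by
    intro n σ h
    exact encode_of_decode h
  exact hne (he σ (key n σ hσ h1 (enc n σ hσ)) σ' (key n' σ' hσ' h2 (enc n' σ' hσ')) hp)



/-- weight exponent of a program -/
def wtE (e : ℕ) (σ : List Bool) : ℕ := σ.length + 2 * e + 2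

/-- index of the block for the program and the guess -/
def idx (e : ℕ) (σ ξ : List Bool) : ℕ := Encodable.encode (e, σ, ξ)

/-- the code of `1^n` -/
def ones (n : ℕ) : ℕ := Encodable.encode (List.replicate n true)

theorem ones_inj {n m : ℕ} (h : ones n = ones m) : n = m := by
  have := Encodable.encode_inj.1 h
  simpa using congrArg List.length this

theorem prim_ones : Primrec ones := by
  have : Primrec fun n : ℕ => Encodable.encode ((List.range n).map fun _ => true) :=
    Primrec.encode.comp (Primrec.list_map Primrec.list_range (Primrec.const _).to₂)
  exact this.of_eq fun n => by simp [ones, List.map_const']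

theorem prim_wtE {α : Type} [Primcodable α] {e : α → ℕ} {σ : α → List Bool} (he : Primrec e)
    (hσ : Primrec σ) : Primrec fun a => wtE (e a) (σ a) :=
  Primrec.nat_add.comp (Primrec.nat_add.comp (Primrec.list_length.comp hσ)
    (Primrec.nat_mul.comp (Primrec.const 2) he)) (Primrec.const 2)

theorem sum_wtE (c : ℕ) (S : ℕ → Set (List Bool)) (hS : ∀ e, PrefixFreeSet (S e)) :
    ∑' e, ∑' σ : S e, (2⁻¹ : ℝ≥0∞) ^ (wtE e σ + c) ≤ 2⁻¹ ^ c := by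
  have h1 : ∀ e, ∑' σ : S e, (2⁻¹ : ℝ≥0∞) ^ (wtE e σ + c) ≤ 2⁻¹ ^ (e + 1) * 2⁻¹ ^ c := by
    intro e
    have : ∀ σ : S e, (2⁻¹ : ℝ≥0∞) ^ (wtE e σ + c) =
        2⁻¹ ^ (2 * e + 2 + c) * 2⁻¹ ^ (σ : List Bool).length := by
      intro σ; rw [← pow_add, wtE]; congr 1; ring
    simp_rw [this]
    rw [ENNReal.tsum_mul_left]
    calc (2⁻¹ : ℝ≥0∞) ^ (2 * e + 2 + c) * _ ≤ 2⁻¹ ^ (2 * e + 2 + c) * 1 := by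
          gcongr; exact kraft _ (hS e)
      _ ≤ _ := by
          rw [mul_one, ← pow_add]
          exact pow_le_pow_right_of_le_one' (by simp) (by omega)
  calc _ ≤ ∑' e : ℕ, (2⁻¹ : ℝ≥0∞) ^ (e + 1) * 2⁻¹ ^ c := ENNReal.tsum_le_tsum h1
    _ = _ := by
      rw [ENNReal.tsum_mul_right]
      simp_rw [pow_succ]
      rw [ENNReal.tsum_mul_right, ENNReal.tsum_geometric, ENNReal.one_sub_inv_two, inv_inv,
        ENNReal.mul_inv_cancel (by simp) (by simp), one_mul]

theorem exists_test (A : ℕ → Bool) : ∃ G, MLTestIn A G ∧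
    (∀ c e σ n, AccO e σ (ones n) → blk (idx e σ (strPrefix A n)) (wtE e σ + c) ⊆ G c) ∧
    ∀ c, ∃ S, G c = openOf S := by
  let p : List Bool × ℕ × ℕ → Prop := fun x => ∃ y : ℕ × List Bool × List Bool,
    x.2.1.unpair.2 = Encodable.encode y.2.2 ∧ AccO y.1 y.2.1 (ones x.1.length) ∧
      hitB (idx y.1 y.2.1 x.1) (wtE y.1 y.2.1 + x.2.1.unpair.1) y.2.2
  have hp : Sig p := by
    refine Sig.ex (p := fun z : (List Bool × ℕ × ℕ) × (ℕ × List Bool × List Bool) =>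
      z.1.2.1.unpair.2 = Encodable.encode z.2.2.2 ∧ AccO z.2.1 z.2.2.1 (ones z.1.1.length) ∧
      hitB (idx z.2.1 z.2.2.1 z.1.1) (wtE z.2.1 z.2.2.1 + z.1.2.1.unpair.1) z.2.2.2) ?_
    have a1 : Primrec fun z : (List Bool × ℕ × ℕ) × (ℕ × List Bool × List Bool) => z.1.1 :=
      Primrec.fst.comp Primrec.fst
    have a2 : Primrec fun z : (List Bool × ℕ × ℕ) × (ℕ × List Bool × List Bool) => z.1.2.1 :=
      Primrec.fst.comp (Primrec.snd.comp Primrec.fst)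
    have b1 : Primrec fun z : (List Bool × ℕ × ℕ) × (ℕ × List Bool × List Bool) => z.2.1 :=
      Primrec.fst.comp Primrec.snd
    have b2 : Primrec fun z : (List Bool × ℕ × ℕ) × (ℕ × List Bool × List Bool) => z.2.2.1 :=
      Primrec.fst.comp (Primrec.snd.comp Primrec.snd)
    have b3 : Primrec fun z : (List Bool × ℕ × ℕ) × (ℕ × List Bool × List Bool) => z.2.2.2 :=
      Primrec.snd.comp (Primrec.snd.comp Primrec.snd)
    refine (Sig.prim ?_).and (Sig.and ?_ (Sig.prim ?_))
    · exact Primrec.eq.comp (Primrec.snd.comp (Primrec.unpair.comp a2)) (Primrec.encode.comp b3)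
    · exact sig_accO.comp (b1.pair (b2.pair (prim_ones.comp (Primrec.list_length.comp a1))))
    · exact pp_hitB (Primrec.encode.comp (b1.pair (b2.pair a1)))
        (Primrec.nat_add.comp (prim_wtE b1 b2) (Primrec.fst.comp (Primrec.unpair.comp a2))) b3
  obtain ⟨e₀, he₀⟩ := hp.toOracle
  have hmem : ∀ c X, X ∈ testLevel e₀ A c ↔ ∃ e σ n, AccO e σ (ones n) ∧
      X ∈ blk (idx e σ (strPrefix A n)) (wtE e σ + c) := by
    intro c X
    rw [testLevel, mem_openOf]
    simp only [Set.mem_ofPred_eq, he₀, p, Nat.unpair_pair]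
    constructor
    · rintro ⟨s, ⟨_, ξ, hξ, ⟨⟨e, σ, s'⟩, h1, h2, h3⟩⟩, hs⟩
      have := Encodable.encode_inj.1 h1
      subst this
      refine ⟨e, σ, ξ.length, h2, ?_⟩
      rw [(isPrefixOf_iff _ _).1 hξ, mem_blk_iff_hit]
      exact ⟨_, h3, hs⟩
    · rintro ⟨e, σ, n, h2, h⟩
      obtain ⟨s, h3, hs⟩ := (mem_blk_iff_hit _ _ _).1 h
      refine ⟨s, ⟨0, strPrefix A n, isPrefixOf_strPrefix _ _, (e, σ, s), rfl, ?_, h3⟩, hs⟩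
      rwa [strPrefix_length]
  refine ⟨testLevel e₀ A, ⟨⟨e₀, fun n => rfl⟩, fun c => ?_⟩, ?_, fun c => ⟨_, rfl⟩⟩
  · let S : ℕ → Set (List Bool) := fun e => {σ | ∃ y, AccO e σ y}
    let B : ℕ → List Bool → Set (ℕ → Bool) := fun e σ =>
      {X | ∃ n, AccO e σ (ones n) ∧ X ∈ blk (idx e σ (strPrefix A n)) (wtE e σ + c)}
    have hB : ∀ e σ, μCantor (B e σ) ≤ 2⁻¹ ^ (wtE e σ + c) := by
      intro e σ
      by_cases h : ∃ n, AccO e σ (ones n)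
      · obtain ⟨n, hn⟩ := h
        rw [← mu_blk (idx e σ (strPrefix A n))]
        apply measure_mono
        rintro X ⟨m, hm, hX⟩
        rwa [ones_inj (accO_unique hn hm)]
      · have : B e σ = ∅ := by
          ext X
          simp only [B, Set.mem_ofPred_eq, Set.mem_empty_iff_false, iff_false]
          rintro ⟨n, hn, _⟩
          exact h ⟨n, hn⟩
        rw [this]; simp
    have hsub : testLevel e₀ A c ⊆ ⋃ e, ⋃ σ : S e, B e σ := by
      intro X hX
      obtain ⟨e, σ, n, h1, h2⟩ := (hmem c X).1 hX
      simp only [Set.mem_iUnion]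
      exact ⟨e, ⟨σ, _, h1⟩, n, h1, h2⟩
    calc _ ≤ _ := measure_mono hsub
      _ ≤ ∑' e, μCantor (⋃ σ : S e, B e σ) := measure_iUnion_le _
      _ ≤ ∑' e, ∑' σ : S e, μCantor (B e σ) :=
          ENNReal.tsum_le_tsum fun e => measure_iUnion_le _
      _ ≤ ∑' e, ∑' σ : S e, 2⁻¹ ^ (wtE e σ + c) :=
          ENNReal.tsum_le_tsum fun e => ENNReal.tsum_le_tsum fun σ => hB e σ
      _ ≤ _ := sum_wtE c S accO_prefixFree
  · intro c e σ n h X hX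
    exact (hmem c X).2 ⟨e, σ, n, h, hX⟩

/-- Baire category style argument. -/
theorem baire_step (T : Set (List Bool)) (ζ : List Bool) (G : ℕ → Set (ℕ → Bool))
    (hG : ∀ c, ∃ S, G c = openOf S)
    (hpos : 0 < μCantor (cylinder ζ ∩ (openOf T)ᶜ))
    (hno : ∀ X ∈ cylinder ζ ∩ (openOf T)ᶜ, ∃ c, X ∉ G c) :
    ∃ ζ' c, 0 < μCantor (cylinder ζ' ∩ (openOf T)ᶜ) ∧
      μCantor (cylinder ζ' ∩ (openOf T)ᶜ ∩ G c) = 0 := by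
  by_contra hcon
  push Not at hcon
  set R := (openOf T)ᶜ with hR
  have step : ∀ (c : ℕ) (z : {z : List Bool // 0 < μCantor (cylinder z ∩ R)}),
      ∃ z' : {z : List Bool // 0 < μCantor (cylinder z ∩ R)},
        z.1 <+: z'.1 ∧ c ≤ z'.1.length ∧ cylinder z'.1 ⊆ G c := by
    rintro c ⟨z, hz⟩
    have h1 := hcon z c hz
    obtain ⟨S, hS⟩ := hG c
    by_contra hc
    apply h1
    have hz' : ∀ z' : List Bool, z <+: z' → c ≤ z'.length → cylinder z' ⊆ G c →
        μCantor (cylinder z' ∩ R) = 0 := by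
      intro z' a1 a2 a3
      by_contra h
      exact hc ⟨⟨z', pos_iff_ne_zero.2 h⟩, a1, a2, a3⟩
    have hsub : cylinder z ∩ R ∩ G c ⊆ ⋃ z' : {z' : List Bool // z <+: z' ∧ c ≤ z'.length ∧
        cylinder z' ⊆ G c}, cylinder z'.1 ∩ R := by
      rintro X ⟨⟨h2, h3⟩, h4⟩
      have h4' := h4
      rw [hS, mem_openOf] at h4
      obtain ⟨s, hs, hsX⟩ := h4
      let N := max z.length (max c s.length)
      have hp : ∀ t : List Bool, IsPrefixOf t X → t.length ≤ N → t <+: strPrefix X N :=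
        fun t ht hl => prefix_of_isPrefixOf ht (isPrefixOf_strPrefix _ _)
          (by rw [strPrefix_length]; exact hl)
      simp only [Set.mem_iUnion]
      refine ⟨⟨strPrefix X N, hp z h2 (by simp [N]), by rw [strPrefix_length]; simp [N], ?_⟩,
        isPrefixOf_strPrefix _ _, h3⟩
      intro Y hY
      rw [hS, mem_openOf]
      exact ⟨s, hs, isPrefixOf_mono (hp s hsX (by simp [N])) hY⟩
    refine measure_mono_null hsub (measure_iUnion_null fun z' => ?_)
    exact hz' _ z'.2.1 z'.2.2.1 z'.2.2.2
  choose next h1 h2 h3 using step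
  let Z : ℕ → {z : List Bool // 0 < μCantor (cylinder z ∩ R)} :=
    fun n => Nat.rec ⟨ζ, hpos⟩ (fun n z => next n z) n
  have hZ : ∀ n, Z (n+1) = next n (Z n) := fun n => rfl
  have hmono : ∀ n k, (Z n).1 <+: (Z (n + k)).1 := by
    intro n k
    induction k with
    | zero => exact List.prefix_rfl
    | succ k ih => exact ih.trans (by rw [← add_assoc, hZ]; exact h1 _ _)
  have hlen : ∀ n, n ≤ (Z (n+1)).1.length := fun n => by rw [hZ]; exact h2 _ _
  let X : ℕ → Bool := fun m => ((Z (m+2)).1[m]?).getD false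
  have hX : ∀ n, IsPrefixOf (Z n).1 X := by
    rintro n ⟨m, hm⟩
    have hm2 : m < (Z (m+2)).1.length := hlen (m+1)
    have a1 := hmono n (m+2)
    have a2 := hmono (m+2) n
    rw [show m + 2 + n = n + (m + 2) by ring] at a2
    have e1 := a1.getElem hm
    have e2 := a2.getElem hm2
    simp only [X, List.getElem?_eq_getElem hm2, Option.getD_some, List.get_eq_getElem]
    rw [e1, e2]
  have hXR : X ∈ R := by
    rw [hR, Set.mem_compl_iff, mem_openOf]
    rintro ⟨s, hs, hsX⟩
    have hp : s <+: (Z (s.length + 1)).1 := prefix_of_isPrefixOf hsX (hX (s.length + 1)) (hlen _)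
    have := (Z (s.length + 1)).2
    have hemp : cylinder (Z (s.length + 1)).1 ∩ R = ∅ := by
      ext Y
      simp only [Set.mem_inter_iff, Set.mem_empty_iff_false, iff_false, not_and]
      intro hY hYR
      exact hYR (mem_openOf.2 ⟨s, hs, isPrefixOf_mono hp hY⟩)
    rw [hemp] at this
    simp at this
  obtain ⟨c, hc⟩ := hno X ⟨hX 0, hXR⟩
  apply hc
  have := hX (c+1)
  rw [hZ] at this
  exact h3 _ _ this



theorem key (A : ℕ → Bool) (T : Set (List Bool)) (hT : Sig fun s => s ∈ T) (ζ : List Bool)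
    (hpos : 0 < μCantor (cylinder ζ ∩ (openOf T)ᶜ))
    (hrand : ∀ X ∈ cylinder ζ ∩ (openOf T)ᶜ, MLRandomIn A X) : KTrivial A := by
  obtain ⟨G, hG1, hG2, hG3⟩ := exists_test A
  obtain ⟨z, c, hz, hzc⟩ := baire_step T ζ G hG3 hpos (fun X hX => hrand X hX G hG1)
  set R := cylinder z ∩ (openOf T)ᶜ with hR
  obtain ⟨b0, hb0⟩ := ENNReal.exists_inv_two_pow_lt hz.ne'
  let wj : ℕ × List Bool × List Bool → ℕ := fun j => wtE j.1 j.2.1 + c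
  have pwj : Primrec wj := Primrec.nat_add.comp
    (prim_wtE Primrec.fst (Primrec.fst.comp Primrec.snd)) (Primrec.const c)
  let pI : ℕ × List Bool × List Bool → Prop := fun j => AccO j.1 j.2.1 (ones j.2.2.length) ∧
    μCantor (R ∩ blk (Encodable.encode j) (wj j)) < 2⁻¹ ^ (Encodable.encode j + 1 + b0)
  have hpI : Sig pI := by
    refine Sig.and ?_ ?_
    · exact sig_accO.comp (Primrec.fst.pair ((Primrec.fst.comp Primrec.snd).pair
        (prim_ones.comp (Primrec.list_length.comp (Primrec.snd.comp Primrec.snd)))))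
    · have h1 : Sig fun x : (ℕ × List Bool × List Bool) × List Bool =>
          x.2 ∈ T ∨ missB (Encodable.encode x.1) (wj x.1) x.2 :=
        (hT.comp Primrec.snd).or (Sig.prim (pp_missB (Primrec.encode.comp Primrec.fst)
          (pwj.comp Primrec.fst) Primrec.snd))
      have h2 := (sig_dens h1).comp (f := fun j : ℕ × List Bool × List Bool =>
        (j, z, 2 ^ z.length, 2 ^ (Encodable.encode j + 1 + b0)))
        (Primrec.id.pair ((Primrec.const z).pair ((Primrec.const _).pair
          (prim_pow.comp (Primrec.const 2) (Primrec.nat_add.comp (Primrec.nat_add.comp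
            Primrec.encode (Primrec.const 1)) (Primrec.const b0))))))
      refine h2.of_eq fun j => ?_
      have hset : cylinder z ∩ (openOf {s | s ∈ T ∨ missB (Encodable.encode j) (wj j) s})ᶜ =
          R ∩ blk (Encodable.encode j) (wj j) := by
        rw [hR, Set.inter_assoc]
        congr 1
        ext X
        have := not_mem_blk_iff (Encodable.encode j) (wj j) X
        simp only [Set.mem_compl_iff, mem_openOf, Set.mem_ofPred_eq, Set.mem_inter_iff]
        rw [← not_iff_not, not_and_or, not_not, not_not, this]
        simp only [or_and_right, exists_or]
      simp only [dens]
      rw [hset]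
      generalize μCantor (R ∩ blk (Encodable.encode j) (wj j)) = x
      generalize Encodable.encode j + 1 + b0 = m
      push_cast
      rw [mul_right_comm]
      have p0 : (2:ℝ≥0∞) ^ z.length ≠ 0 := by simp
      have p1 : (2:ℝ≥0∞) ^ z.length ≠ ⊤ := by simp
      rw [show (x * 2 ^ m * 2 ^ z.length < 2 ^ z.length) ↔
        (x * 2 ^ m * 2 ^ z.length < 1 * 2 ^ z.length) by rw [one_mul],
        ENNReal.mul_lt_mul_iff_left p0 p1, ← ENNReal.inv_pow,
        ← ENNReal.lt_div_iff_mul_lt (by simp) (by simp), one_div]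
  let wI : ℕ → ℕ := fun i => ((Encodable.decode (α := ℕ × List Bool × List Bool) i).map wj).getD 0
  have hwI : ∀ j, wI (Encodable.encode j) = wj j := by
    intro j; simp only [wI, Encodable.encodek, Option.map_some, Option.getD_some]
  let I : Set ℕ := {i | ∃ j, i = Encodable.encode j ∧ pI j}
  let R' := R \ ⋃ i : I, (R ∩ blk i (wI i))
  have hR' : 0 < μCantor R' := by
    have h1 : μCantor (⋃ i : I, (R ∩ blk i (wI i))) ≤ 2⁻¹ ^ b0 := by
      calc _ ≤ ∑' i : I, μCantor (R ∩ blk i (wI i)) := measure_iUnion_le _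
        _ ≤ ∑' i : I, (2⁻¹ : ℝ≥0∞) ^ ((i:ℕ) + 1 + b0) := by
            refine ENNReal.tsum_le_tsum ?_
            rintro ⟨i, j, rfl, hj⟩
            simp only [hwI]
            exact hj.2.le
        _ ≤ ∑' i : ℕ, (2⁻¹ : ℝ≥0∞) ^ (i + 1 + b0) :=
            ENNReal.tsum_comp_le_tsum_of_injective Subtype.val_injective _
        _ = _ := by
            simp_rw [pow_add]
            rw [ENNReal.tsum_mul_right, ENNReal.tsum_mul_right, ENNReal.tsum_geometric,
              ENNReal.one_sub_inv_two, inv_inv, pow_one,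
              ENNReal.mul_inv_cancel (by simp) (by simp), one_mul]
    have h2 : μCantor R ≤ μCantor R' + μCantor (⋃ i : I, (R ∩ blk i (wI i))) :=
      (measure_mono (Set.subset_sdiff_union R _)).trans (measure_union_le _ _)
    rw [pos_iff_ne_zero]
    intro h0
    rw [h0, zero_add] at h2
    exact absurd (h2.trans h1) (not_le.2 hb0)
  have hsum := blk_sum_lt_top I wI R' hR' (by
    intro i hi
    rw [Set.disjoint_left]
    rintro X ⟨h1, h2⟩ h3
    exact h2 (Set.mem_iUnion.2 ⟨⟨i, hi⟩, h1, h3⟩))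
  obtain ⟨b, hb⟩ := ENNReal.exists_nat_gt hsum.ne
  have hb' : (∑' i : I, (2⁻¹ : ℝ≥0∞) ^ (wI i)) * 2⁻¹ ^ b ≤ 1 := by
    have : (b : ℝ≥0∞) ≤ 2 ^ b := by exact_mod_cast (Nat.lt_two_pow_self).le
    calc _ ≤ (2:ℝ≥0∞) ^ b * 2⁻¹ ^ b := by gcongr; exact hb.le.trans this
      _ = 1 := by rw [← ENNReal.inv_pow, ENNReal.mul_inv_cancel (by simp) (by simp)]
  obtain ⟨q, hq, hqI⟩ := hpI
  classical
  let q' : (ℕ × List Bool × List Bool) → ℕ → ℕ → Prop := fun j n k =>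
    Encodable.encode j = n ∧ q (j, k) ∧ ∀ k' < k, ¬ q (j, k')
  let req : ℕ → Option (ℕ × ℕ) := fun t =>
    (Encodable.decode (α := ℕ × List Bool × List Bool) t.unpair.1).bind fun j =>
      if q' j t.unpair.1 t.unpair.2 then some (wj j + b, Encodable.encode j.2.2) else none
  have hq' : PrimrecPred fun x : ℕ × (ℕ × List Bool × List Bool) =>
      q' x.2 x.1.unpair.1 x.1.unpair.2 := by
    have hk : Primrec fun x : ℕ × (ℕ × List Bool × List Bool) => x.1.unpair.2 :=
      Primrec.snd.comp (Primrec.unpair.comp Primrec.fst)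
    refine PrimrecPred.and ?_ (PrimrecPred.and ?_ ?_)
    · exact Primrec.eq.comp (Primrec.encode.comp Primrec.snd)
        (Primrec.fst.comp (Primrec.unpair.comp Primrec.fst))
    · exact hq.comp (Primrec.snd.pair hk)
    · refine pp_forall_lt (q := fun (x : ℕ × (ℕ × List Bool × List Bool)) k' => ¬ q (x.2, k'))
        hk ?_
      exact PrimrecPred.not (hq.comp ((Primrec.snd.comp Primrec.fst).pair Primrec.snd))
  have hreq : Primrec req := by
    refine Primrec.option_bind (Primrec.decode.comp (Primrec.fst.comp Primrec.unpair)) ?_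
    refine Primrec.ite hq' (Primrec.option_some.comp (Primrec.pair (Primrec.nat_add.comp
      (pwj.comp Primrec.snd) (Primrec.const b)) (Primrec.encode.comp
        (Primrec.snd.comp (Primrec.snd.comp Primrec.snd))))) (Primrec.const none)
  have hreqs : ∀ n k v, req (Nat.pair n k) = some v → ∃ j, q' j n k ∧
      v = (wj j + b, Encodable.encode j.2.2) := by
    intro n k v h
    simp only [req, Nat.unpair_pair, Option.bind_eq_some_iff] at h
    obtain ⟨j, _, h2⟩ := h
    split_ifs at h2 with h3
    exact ⟨j, h3, (Option.some.inj h2).symm⟩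
  have hreqsum : ∑' t, rwt (req t) ≤ 1 := by
    have h1 : ∑' t, rwt (req t) = ∑' n, ∑' k, rwt (req (Nat.pair n k)) := by
      rw [← Nat.pairEquiv.tsum_eq (fun t => rwt (req t)),
        ← ENNReal.tsum_prod (f := fun n k => rwt (req (Nat.pair n k)))]
      rfl
    have h2 : ∀ n, ∑' k, rwt (req (Nat.pair n k)) ≤
        I.indicator (fun i => (2⁻¹ : ℝ≥0∞) ^ (wI i) * 2⁻¹ ^ b) n := by
      intro n
      by_cases h : ∃ k v, req (Nat.pair n k) = some v
      · obtain ⟨k, v, hv⟩ := h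
        obtain ⟨j, ⟨j1, j2, j3⟩, rfl⟩ := hreqs _ _ _ hv
        have hnI : n ∈ I := ⟨j, j1.symm, (hqI j).2 ⟨k, j2⟩⟩
        rw [tsum_eq_single k, Set.indicator_of_mem hnI, hv, ← j1, hwI, ← pow_add]
        · rfl
        · intro k' hk'
          cases hv' : req (Nat.pair n k') with
          | none => rfl
          | some v' =>
            exfalso
            obtain ⟨j', ⟨j1', j2', j3'⟩, _⟩ := hreqs _ _ _ hv'
            have : j' = j := Encodable.encode_inj.1 (j1'.trans j1.symm)
            subst this
            rcases lt_trichotomy k k' with hl | hl | hl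
            · exact j3' _ hl j2
            · exact hk' hl.symm
            · exact j3 _ hl j2'
      · have : ∀ k, rwt (req (Nat.pair n k)) = 0 := by
          intro k
          cases hv : req (Nat.pair n k) with
          | none => rfl
          | some v => exact absurd ⟨k, v, hv⟩ h
        simp [this]
    rw [h1]
    refine (ENNReal.tsum_le_tsum h2).trans ?_
    rw [← tsum_subtype, ENNReal.tsum_mul_right]
    exact hb'
  obtain ⟨e', he', hK⟩ := kraft_chaitin req hreq hreqsum
  refine ⟨c + b + 1 + 2 * e' + 2, fun n => ?_⟩
  obtain ⟨e, σ, hpf, hout, hlen⟩ := Nat.sInf_mem (K_nonempty (ones n))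
  have hacc : AccO e σ (ones n) := accO_of_prefixFree hpf hout
  have hj : pI (e, σ, strPrefix A n) := by
    refine ⟨?_, ?_⟩
    · simpa only [strPrefix_length] using hacc
    · have : μCantor (R ∩ blk (Encodable.encode (e, σ, strPrefix A n))
          (wj (e, σ, strPrefix A n))) = 0 :=
        measure_mono_null (Set.inter_subset_inter_right _ (hG2 c e σ n hacc)) hzc
      rw [this]
      exact ENNReal.pow_pos (by simp) _
  have hex := (hqI _).1 hj
  obtain ⟨σ', hl', hv'⟩ := hK (Nat.pair (Encodable.encode (e, σ, strPrefix A n)) (Nat.find hex))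
    (wj (e, σ, strPrefix A n) + b) (Encodable.encode (strPrefix A n)) (by
      simp only [req, Nat.unpair_pair, Encodable.encodek, Option.bind_some]
      rw [if_pos ⟨rfl, Nat.find_spec hex, fun k' hk' => Nat.find_min hex hk'⟩])
  have h1 : Kcpx (Encodable.encode (strPrefix A n)) ≤ σ'.length + 2 * e' + 2 :=
    Nat.sInf_le ⟨e', σ', he', hv', rfl⟩
  have h2 : KofNat n = σ.length + 2 * e + 2 := hlen
  rw [h2]
  refine h1.trans ?_
  rw [hl']
  simp only [wj, wtE]
  omega



/-- incomparability of strings -/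
def Incomp (f g : List Bool) : Prop := ¬ f <+: g ∧ ¬ g <+: f

open Classical in
/-- append a candidate if it is incomparable with all the earlier ones -/
noncomputable def stepH (acc : List (List Bool)) (o : Option (List Bool)) : List (List Bool) :=
  Option.casesOn o acc fun ρ => if ∀ f ∈ acc, Incomp f ρ then acc ++ [ρ] else acc

/-- the list of strings enumerated along an oracle -/
noncomputable def listH (cand : List Bool → Option (List Bool)) (ξ : List Bool) :
    List (List Bool) :=
  (List.range ξ.length).foldl (fun acc t => stepH acc (cand (ξ.take t))) []

theorem prim_stepH : Primrec₂ stepH := by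
  classical
  unfold stepH
  refine Primrec.option_casesOn Primrec.snd Primrec.fst ?_
  have h1 : PrimrecPred fun x : (List (List Bool) × Option (List Bool)) × List Bool =>
      ∀ f ∈ x.1.1, Incomp f x.2 := by
    refine pp_forall_mem (q := fun (x : (List (List Bool) × Option (List Bool)) × List Bool) f =>
      Incomp f x.2) (Primrec.fst.comp Primrec.fst) ?_
    have a := Primrec.snd.comp (Primrec.fst (α := (List (List Bool) × Option (List Bool)) ×
      List Bool) (β := List Bool))
    exact PrimrecPred.and (PrimrecPred.not (pp_pre.comp (Primrec.snd.pair a)))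
      (PrimrecPred.not (pp_pre.comp (a.pair Primrec.snd)))
  exact (Primrec.ite h1 (Primrec.list_append.comp (Primrec.fst.comp Primrec.fst)
    (Primrec.list_cons.comp Primrec.snd (Primrec.const []))) (Primrec.fst.comp Primrec.fst))

theorem prim_listH {cand : List Bool → Option (List Bool)} (h : Primrec cand) :
    Primrec (listH cand) := by
  refine Primrec.list_foldl (Primrec.list_range.comp Primrec.list_length) (Primrec.const [])
    (h := fun ξ x => stepH x.1 (cand (ξ.take x.2))) ?_
  exact prim_stepH.comp (Primrec.fst.comp Primrec.snd) (h.comp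
    (Primrec.list_take.comp (Primrec.snd.comp Primrec.snd) Primrec.fst))

theorem enum_seq (Y : ℕ → Bool) (cand : List Bool → Option (List Bool)) (hc : Primrec cand)
    (C : Set (List Bool)) (hC : ∀ ρ, ρ ∈ C ↔ ∃ t, cand (strPrefix Y t) = some ρ)
    (hext : ∀ F : List (List Bool), (∀ f ∈ F, f ∈ C) → ∃ ρ ∈ C, ∀ f ∈ F, Incomp f ρ) :
    ∃ ρ : ℕ → List Bool, FnComputableIn (fun i => Encodable.encode (ρ i)) Y ∧
      (∀ i j, i ≠ j → ¬ ρ i <+: ρ j) ∧ ∀ i, ρ i ∈ C := by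
  classical
  let HY : ℕ → List (List Bool) := fun N => listH cand (strPrefix Y N)
  have hHY : ∀ N, HY N =
      (List.range N).foldl (fun acc t => stepH acc (cand (strPrefix Y t))) [] := by
    intro N
    simp only [HY, listH, strPrefix_length]
    apply List.foldl_ext
    intro a t ht
    rw [strPrefix_take Y (List.mem_range.1 ht).le]
  have hsucc : ∀ N, HY (N+1) = stepH (HY N) (cand (strPrefix Y N)) := by
    intro N
    rw [hHY, hHY, List.range_succ, List.foldl_append]
    rfl
  have hzero : HY 0 = [] := by rw [hHY]; rfl
  have hcases : ∀ N, HY (N+1) = HY N ∨ ∃ ρ, cand (strPrefix Y N) = some ρ ∧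
      (∀ f ∈ HY N, Incomp f ρ) ∧ HY (N+1) = HY N ++ [ρ] := by
    intro N
    rw [hsucc]
    cases h : cand (strPrefix Y N) with
    | none => left; rfl
    | some ρ =>
      by_cases hi : ∀ f ∈ HY N, Incomp f ρ
      · right
        exact ⟨ρ, rfl, hi, if_pos hi⟩
      · left
        exact if_neg hi
  have hstep : ∀ N, HY N <+: HY (N+1) := by
    intro N
    rcases hcases N with h | ⟨ρ, _, _, h⟩ <;> rw [h]
    exact List.prefix_append _ _
  have hmono : ∀ N M, N ≤ M → HY N <+: HY M := by
    intro N M h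
    induction M, h using Nat.le_induction with
    | base => exact List.prefix_rfl
    | succ M _ ih => exact ih.trans (hstep M)
  have hsub : ∀ N, ∀ f ∈ HY N, f ∈ C := by
    intro N
    induction N with
    | zero => rw [hzero]; simp
    | succ N ih =>
      rcases hcases N with h | ⟨ρ, h1, _, h⟩ <;> rw [h]
      · exact ih
      · intro f hf
        rcases List.mem_append.1 hf with hf | hf
        · exact ih f hf
        · rw [List.mem_singleton.1 hf]; exact (hC _).2 ⟨N, h1⟩
  have hpair : ∀ N, (HY N).Pairwise Incomp := by
    intro N
    induction N with
    | zero => rw [hzero]; simp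
    | succ N ih =>
      rcases hcases N with h | ⟨ρ, h1, h2, h⟩ <;> rw [h]
      · exact ih
      · rw [List.pairwise_append]
        refine ⟨ih, by simp, fun f hf g hg => ?_⟩
        rw [List.mem_singleton.1 hg]; exact h2 f hf
  have hcomp : ∀ t ρ, cand (strPrefix Y t) = some ρ → ∃ f ∈ HY (t+1), ¬ Incomp f ρ := by
    intro t ρ h
    by_cases hi : ∀ f ∈ HY t, Incomp f ρ
    · refine ⟨ρ, ?_, fun h => h.1 List.prefix_rfl⟩
      rw [hsucc, h]
      have : stepH (HY t) (some ρ) = HY t ++ [ρ] := if_pos hi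
      rw [this]; simp
    · push Not at hi
      obtain ⟨f, hf, hf'⟩ := hi
      exact ⟨f, (hstep t).subset hf, hf'⟩
  have hunb : ∀ L, ∃ N, L < (HY N).length := by
    have grow : ∀ N, ∃ M, (HY N).length < (HY M).length := by
      intro N
      obtain ⟨ρ, hρ, hinc⟩ := hext (HY N) (hsub N)
      obtain ⟨t, ht⟩ := (hC ρ).1 hρ
      obtain ⟨f, hf, hfρ⟩ := hcomp t ρ ht
      refine ⟨max N (t+1), ?_⟩
      have h1 := hmono N (max N (t+1)) (le_max_left _ _)
      have h2 := (hmono (t+1) (max N (t+1)) (le_max_right _ _)).subset hf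
      by_contra hl
      rw [← h1.eq_of_length (le_antisymm h1.length_le (not_lt.1 hl))] at h2
      exact hfρ (hinc f h2)
    intro L
    induction L with
    | zero =>
      obtain ⟨M, hM⟩ := grow 0
      exact ⟨M, by omega⟩
    | succ L ih =>
      obtain ⟨N, hN⟩ := ih
      obtain ⟨M, hM⟩ := grow N
      exact ⟨M, by omega⟩
  choose Nf hNf using hunb
  let r : ℕ → List Bool := fun i => (HY (Nf i))[i]'(hNf i)
  have hr : ∀ M i, i < (HY M).length → (HY M)[i]? = some (r i) := by
    intro M i hi
    have e1 := (hmono M (max M (Nf i)) (le_max_left _ _)).getElem hi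
    have e2 := (hmono (Nf i) (max M (Nf i)) (le_max_right _ _)).getElem (hNf i)
    rw [List.getElem?_eq_getElem hi, e1, ← e2]
  refine ⟨r, ?_, ?_, ?_⟩
  · have hp : Sig fun x : List Bool × ℕ × ℕ =>
        ((listH cand x.1)[x.2.1]?).map Encodable.encode = some x.2.2 := by
      refine Sig.prim (Primrec.eq.comp (Primrec.option_map (Primrec.list_getElem?.comp
        ((prim_listH hc).comp Primrec.fst) (Primrec.fst.comp Primrec.snd))
        (Primrec.encode.comp Primrec.snd).to₂)
        (Primrec.option_some.comp (Primrec.snd.comp Primrec.snd)))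
    obtain ⟨e, he⟩ := hp.toOracle
    refine ⟨e, fun n m => ?_⟩
    rw [he]
    constructor
    · rintro ⟨σ, hσ, h⟩
      rw [← (isPrefixOf_iff _ _).1 hσ] at h
      change Option.map _ ((HY σ.length)[n]?) = _ at h
      have hn : n < (HY σ.length).length := by
        by_contra hn
        rw [List.getElem?_eq_none (not_lt.1 hn)] at h
        simp at h
      rw [hr _ _ hn] at h
      simpa using h.symm
    · rintro rfl
      refine ⟨strPrefix Y (Nf n), isPrefixOf_strPrefix _ _, ?_⟩
      change Option.map _ ((HY (Nf n))[n]?) = _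
      rw [hr _ _ (hNf n)]
      rfl
  · intro i j hij
    let M := max (Nf i) (Nf j)
    have hi : i < (HY M).length := (hNf i).trans_le (hmono _ M (le_max_left _ _)).length_le
    have hj : j < (HY M).length := (hNf j).trans_le (hmono _ M (le_max_right _ _)).length_le
    have ei : (HY M)[i] = r i := Option.some.inj ((List.getElem?_eq_getElem hi).symm.trans (hr M i hi))
    have ej : (HY M)[j] = r j := Option.some.inj ((List.getElem?_eq_getElem hj).symm.trans (hr M j hj))
    have hp := List.pairwise_iff_getElem.1 (hpair M)
    rcases lt_or_gt_of_ne hij with h | h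
    · have := hp i j hi hj h
      rw [ei, ej] at this
      exact this.1
    · have := hp j i hj hi h
      rw [ei, ej] at this
      exact this.2
  · intro i
    exact hsub (Nf i) _ (List.getElem_mem _)

theorem exists_ext (A : ℕ → Bool) (hA : ¬ KTrivial A) (SP : Set (List Bool))
    (hSP : Sig fun s => s ∈ SP) (SQ : Set (List Bool))
    (hQ : ∀ X ∈ (openOf SQ)ᶜ, MLRandomIn A X) (D : List Bool → Prop) (hD : Sig D) (τ : List Bool)
    (hpos : 0 < μCantor ((cylinder τ ∩ ((openOf SP)ᶜ ∩ (openOf SQ)ᶜ)) \ openOf {σ | τ <+: σ ∧ D σ}))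
    (F : List (List Bool)) (hF : ∀ f ∈ F, cylinder f ∩ (openOf SQ)ᶜ = ∅) :
    ∃ ρ, (τ <+: ρ ∧ (∃ s ∈ SQ, s <+: ρ) ∧ ¬ D ρ) ∧ ∀ f ∈ F, Incomp f ρ := by
  let T : Set (List Bool) := {s | s ∈ SP ∨ (τ <+: s ∧ D s) ∨ s ∈ F}
  have hT : Sig fun s => s ∈ T := by
    refine hSP.or (Sig.or ((Sig.prim ?_).and hD) (Sig.prim ?_))
    · exact pp_pre.comp ((Primrec.const τ).pair Primrec.id)
    · have : PrimrecPred fun s : List Bool => ∃ f ∈ F, f = s :=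
        pp_exists_mem (f := fun _ : List Bool => F) (q := fun s f => f = s) (Primrec.const F)
          (Primrec.eq.comp Primrec.snd Primrec.fst)
      exact this.of_eq fun s => by simp
  have hTpos : 0 < μCantor (cylinder τ ∩ (openOf T)ᶜ) := by
    refine hpos.trans_le (measure_mono ?_)
    rintro X ⟨⟨h1, h2, h3⟩, h4⟩
    refine ⟨h1, fun h => ?_⟩
    obtain ⟨s, hs | hs | hs, hsX⟩ := mem_openOf.1 h
    · exact h2 (mem_openOf.2 ⟨s, hs, hsX⟩)
    · exact h4 (mem_openOf.2 ⟨s, hs, hsX⟩)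
    · have : X ∈ cylinder s ∩ (openOf SQ)ᶜ := ⟨hsX, h3⟩
      rw [hF s hs] at this
      exact this
  have : ∃ X ∈ cylinder τ ∩ (openOf T)ᶜ, ¬ MLRandomIn A X := by
    by_contra hcon
    push Not at hcon
    exact hA (key A T hT τ hTpos hcon)
  obtain ⟨X, ⟨hX1, hX2⟩, hX3⟩ := this
  have hXQ : X ∈ openOf SQ := by
    by_contra h
    exact hX3 (hQ X h)
  obtain ⟨s, hs, hsX⟩ := mem_openOf.1 hXQ
  let N := max (max τ.length s.length) (F.map List.length).sum
  have hp : ∀ t : List Bool, IsPrefixOf t X → t.length ≤ N → t <+: strPrefix X N :=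
    fun t ht hl => prefix_of_isPrefixOf ht (isPrefixOf_strPrefix _ _)
      (by rw [strPrefix_length]; exact hl)
  have hτ : τ <+: strPrefix X N := hp τ hX1 (by simp [N])
  refine ⟨strPrefix X N, ⟨hτ, ⟨s, hs, hp s hsX (by simp [N])⟩, fun hDρ => ?_⟩, fun f hf => ?_⟩
  · exact hX2 (mem_openOf.2 ⟨_, Or.inr (Or.inl ⟨hτ, hDρ⟩), isPrefixOf_strPrefix X N⟩)
  · have hfX : ¬ IsPrefixOf f X := fun h => hX2 (mem_openOf.2 ⟨f, Or.inr (Or.inr hf), h⟩)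
    refine ⟨fun h => hfX (isPrefixOf_mono h (isPrefixOf_strPrefix _ _)), fun h => ?_⟩
    have hl : f.length ≤ N := by
      have : f.length ≤ (F.map List.length).sum :=
        List.le_sum_of_mem (List.mem_map.2 ⟨f, hf, rfl⟩)
      exact this.trans (le_max_right _ _)
    have := h.eq_of_length (le_antisymm h.length_le (by rw [strPrefix_length]; exact hl))
    exact hfX (this ▸ isPrefixOf_strPrefix X N)



theorem choose_frac {δ : ℝ≥0∞} (hδ : 0 < δ) (h1 : δ ≠ ⊤) :
    ∃ a d : ℕ, 0 < d ∧ δ / 2 * d ≤ a ∧ (a : ℝ≥0∞) < δ * d := by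
  lift δ to NNReal using h1
  have hr : (0:ℝ) < δ := by exact_mod_cast hδ
  obtain ⟨d, hd⟩ := exists_nat_gt (2 / (δ:ℝ))
  have hd0 : (0:ℝ) < d := lt_trans (by positivity) hd
  refine ⟨⌈(δ:ℝ) * d / 2⌉₊, d, by exact_mod_cast hd0, ?_, ?_⟩
  · have h := Nat.le_ceil ((δ:ℝ) * d / 2)
    have h' : δ / 2 * (d : NNReal) ≤ (⌈(δ:ℝ) * d / 2⌉₊ : NNReal) := by
      rw [← NNReal.coe_le_coe]; push_cast
      calc (δ:ℝ) / 2 * d = δ * d / 2 := by ring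
        _ ≤ _ := h
    have h2 : ((δ / 2 * (d : NNReal) : NNReal) : ℝ≥0∞) ≤ ((⌈(δ:ℝ) * d / 2⌉₊ : NNReal) : ℝ≥0∞) :=
      ENNReal.coe_le_coe.2 h'
    simpa [ENNReal.coe_div] using h2
  · have h := Nat.ceil_lt_add_one (a := (δ:ℝ) * d / 2) (by positivity)
    have hd2 : 2 < (δ:ℝ) * d := by
      rw [div_lt_iff₀ hr] at hd; linarith
    have h' : (⌈(δ:ℝ) * d / 2⌉₊ : NNReal) < δ * (d : NNReal) := by
      rw [← NNReal.coe_lt_coe]; push_cast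
      linarith
    have h2 := ENNReal.coe_lt_coe.2 h'
    simpa using h2

theorem dens_union_bound (P : Set (ℕ → Bool)) (τ : List Bool) (D : List Bool → Prop) (a d : ℕ)
    (hD : ∀ σ, D σ → dens σ P * d ≤ a) :
    μCantor (P ∩ openOf {σ | τ <+: σ ∧ D σ}) * d * 2 ^ τ.length ≤ a := by
  let V : Set (List Bool) := {σ | τ <+: σ ∧ D σ}
  let M : Set (List Bool) := {σ | σ ∈ V ∧ ∀ σ' ∈ V, σ' <+: σ → σ' = σ}
  have hM : ∀ σ ∈ V, ∃ σ' ∈ M, σ' <+: σ := by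
    intro σ hσ
    have hex : ∃ n, ∃ σ' ∈ V, σ' <+: σ ∧ σ'.length = n := ⟨_, σ, hσ, List.prefix_rfl, rfl⟩
    classical
    obtain ⟨σ', h1, h2, h3⟩ := Nat.find_spec hex
    refine ⟨σ', ⟨h1, fun σ'' h4 h5 => ?_⟩, h2⟩
    by_contra hne
    have hl : σ''.length < σ'.length :=
      lt_of_le_of_ne h5.length_le fun h => hne (h5.eq_of_length h)
    rw [h3] at hl
    exact Nat.find_min hex hl ⟨σ'', h4, h5.trans h2, rfl⟩
  have hsub : P ∩ openOf V ⊆ ⋃ σ : M, cylinder σ ∩ P := by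
    rintro X ⟨h1, h2⟩
    obtain ⟨σ, h3, h4⟩ := mem_openOf.1 h2
    obtain ⟨σ', h5, h6⟩ := hM σ h3
    exact Set.mem_iUnion.2 ⟨⟨σ', h5⟩, isPrefixOf_mono h6 h4, h1⟩
  have hsum : ∑' σ : M, μCantor (cylinder σ) ≤ μCantor (cylinder τ) := by
    rw [← measure_iUnion]
    · apply measure_mono
      intro X hX
      obtain ⟨σ, hσ⟩ := Set.mem_iUnion.1 hX
      exact isPrefixOf_mono σ.2.1.1 hσ
    · intro s t hst
      refine disjoint_cylinder (fun h => ?_) (fun h => ?_)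
      · exact hst (Subtype.ext (t.2.2 _ s.2.1 h))
      · exact hst (Subtype.ext (s.2.2 _ t.2.1 h).symm)
    · exact fun σ => measurableSet_cylinder _
  have hpt : ∀ σ : M, μCantor (cylinder σ ∩ P) * d ≤ a * μCantor (cylinder σ) := by
    intro σ
    have h := hD σ σ.2.1.2
    rw [dens, mul_right_comm] at h
    rw [mu_cylinder]
    have := mul_le_mul_left h ((2⁻¹:ℝ≥0∞) ^ (σ : List Bool).length)
    rwa [mul_assoc, ← mul_pow, ENNReal.mul_inv_cancel (by simp) (by simp), one_pow, mul_one]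
      at this
  calc μCantor (P ∩ openOf V) * d * 2 ^ τ.length
      ≤ (∑' σ : M, μCantor (cylinder σ ∩ P)) * d * 2 ^ τ.length := by
        gcongr
        exact (measure_mono hsub).trans (measure_iUnion_le _)
    _ = (∑' σ : M, μCantor (cylinder σ ∩ P) * d) * 2 ^ τ.length := by
        rw [ENNReal.tsum_mul_right]
    _ ≤ (∑' σ : M, a * μCantor (cylinder σ)) * 2 ^ τ.length := by
        exact mul_le_mul_left (ENNReal.tsum_le_tsum hpt) _
    _ ≤ (a * μCantor (cylinder τ)) * 2 ^ τ.length := by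
        rw [ENNReal.tsum_mul_left]; gcongr
    _ = a := by
        rw [mu_cylinder, mul_assoc, ← mul_pow, ENNReal.inv_mul_cancel (by simp) (by simp),
          one_pow, mul_one]

/-- the data of a candidate: `ρ, s, m, σ, k` -/
abbrev CData := List Bool × List Bool × ℕ × List Bool × ℕ

/-- the condition checked for a candidate -/
def CandC (eQ : ℕ) (h : List Bool → ℕ) (τ ξ : List Bool) (y : CData) : Prop :=
  τ <+: y.1 ∧ y.2.1 <+: y.1 ∧
  (ev eQ y.2.2.2.2 (Nat.pair (Encodable.encode y.2.2.2.1)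
    (Nat.pair (Encodable.encode y.2.1) y.2.2.1))).isSome = true ∧
  (∀ j < y.2.2.2.1.length, ξ[2 * j]? = y.2.2.2.1[j]?) ∧
  ξ[2 * h y.1 + 1]? = some false

theorem pp_candC (eQ : ℕ) {h : List Bool → ℕ} (hh : Primrec h) (τ : List Bool) :
    PrimrecPred fun x : List Bool × CData => CandC eQ h τ x.1 x.2 := by
  have b0 : Primrec fun x : List Bool × CData => x.1 := Primrec.fst
  have b1 : Primrec fun x : List Bool × CData => x.2.1 := Primrec.fst.comp Primrec.snd
  have c2 : Primrec fun x : List Bool × CData => x.2.2 := Primrec.snd.comp Primrec.snd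
  have b2 : Primrec fun x : List Bool × CData => x.2.2.1 := Primrec.fst.comp c2
  have c3 : Primrec fun x : List Bool × CData => x.2.2.2 := Primrec.snd.comp c2
  have b3 : Primrec fun x : List Bool × CData => x.2.2.2.1 := Primrec.fst.comp c3
  have c4 : Primrec fun x : List Bool × CData => x.2.2.2.2 := Primrec.snd.comp c3
  have b4 : Primrec fun x : List Bool × CData => x.2.2.2.2.1 := Primrec.fst.comp c4
  have b5 : Primrec fun x : List Bool × CData => x.2.2.2.2.2 := Primrec.snd.comp c4
  refine PrimrecPred.and ?_ (PrimrecPred.and ?_ (PrimrecPred.and ?_ (PrimrecPred.and ?_ ?_)))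
  · exact pp_pre.comp ((Primrec.const τ).pair b1)
  · exact pp_pre.comp (b2.pair b1)
  · exact Primrec.eq.comp (Primrec.option_isSome.comp (prim_ev (Primrec.const eQ) b5
      (Primrec₂.natPair.comp (Primrec.encode.comp b4)
        (Primrec₂.natPair.comp (Primrec.encode.comp b2) b3)))) (Primrec.const true)
  · refine pp_forall_lt (q := fun (x : List Bool × CData) j =>
      x.1[2 * j]? = x.2.2.2.2.1[j]?) (Primrec.list_length.comp b4) ?_
    exact Primrec.eq.comp (Primrec.list_getElem?.comp (b0.comp Primrec.fst)
      (Primrec.nat_mul.comp (Primrec.const 2) Primrec.snd))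
      (Primrec.list_getElem?.comp (b4.comp Primrec.fst) Primrec.snd)
  · exact Primrec.eq.comp (Primrec.list_getElem?.comp b0 (Primrec.succ.comp
      (Primrec.nat_mul.comp (Primrec.const 2) (hh.comp b1)))) (Primrec.const (some false))

open Classical in
/-- the candidate suggested by an oracle string -/
noncomputable def candF (eQ : ℕ) (h : List Bool → ℕ) (τ ξ : List Bool) : Option (List Bool) :=
  (Encodable.decode (α := CData) ξ.length.unpair.1).bind fun y =>
    if CandC eQ h τ ξ y then some y.1 else none

theorem prim_candF (eQ : ℕ) {h : List Bool → ℕ} (hh : Primrec h) (τ : List Bool) :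
    Primrec (candF eQ h τ) := by
  classical
  unfold candF
  refine Primrec.option_bind (Primrec.decode.comp (Primrec.fst.comp
    (Primrec.unpair.comp Primrec.list_length))) ?_
  exact Primrec.ite (pp_candC eQ hh τ) (Primrec.option_some.comp (Primrec.fst.comp Primrec.snd))
    (Primrec.const none)

theorem candF_iff (A : ℕ → Bool) (SQ : Set (List Bool)) (eQ : ℕ)
    (hSQ : ∀ σ : List Bool, σ ∈ SQ ↔ ∃ m, OracleComputes eQ A (Encodable.encode σ) m)
    (D : List Bool → Prop) (h : List Bool → ℕ) (hh : ∀ ρ, zeroJump (h ρ) = true ↔ D ρ)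
    (τ ρ : List Bool) :
    (τ <+: ρ ∧ (∃ s ∈ SQ, s <+: ρ) ∧ ¬ D ρ) ↔
      ∃ t, candF eQ h τ (strPrefix (joinSet A zeroJump) t) = some ρ := by
  classical
  have hev : ∀ j, joinSet A zeroJump (2 * j) = A j := by intro j; simp [joinSet]
  have hodd : ∀ j, joinSet A zeroJump (2 * j + 1) = zeroJump j := by
    intro j
    have h1 : (2 * j + 1) % 2 = 1 := by omega
    have h2 : (2 * j + 1) / 2 = j := by omega
    simp [joinSet, h1, h2]
  constructor
  · rintro ⟨h1, ⟨s, hs, h2⟩, h3⟩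
    obtain ⟨m, σ, hσ, hw⟩ := (hSQ s).1 hs
    obtain ⟨k, hk⟩ := (wenum_iff _ _).1 hw
    let y : CData := (ρ, s, m, σ, k)
    let t := Nat.pair (Encodable.encode y) (2 * σ.length + 2 * h ρ + 2)
    have ht : 2 * σ.length + 2 * h ρ + 2 ≤ t := Nat.right_le_pair _ _
    refine ⟨t, ?_⟩
    have hc : CandC eQ h τ (strPrefix (joinSet A zeroJump) t) y := by
      refine ⟨h1, h2, hk, fun j hj => ?_, ?_⟩
      · change j < σ.length at hj
        rw [strPrefix_get _ (by omega), hev]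
        change _ = σ[j]?
        rw [List.getElem?_eq_getElem hj]
        exact congrArg some (hσ ⟨j, hj⟩)
      · change (strPrefix (joinSet A zeroJump) t)[2 * h ρ + 1]? = _
        rw [strPrefix_get _ (by omega), hodd]
        have := mt (hh ρ).1 h3
        simpa using this
    simp only [candF, strPrefix_length, t, Nat.unpair_pair, Encodable.encodek, Option.bind_some]
    exact if_pos hc
  · rintro ⟨t, ht⟩
    simp only [candF, Option.bind_eq_some_iff] at ht
    obtain ⟨⟨ρ', s, m, σ, k⟩, _, ht⟩ := ht
    split_ifs at ht with hc
    cases ht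
    obtain ⟨h1, h2, h3, h4, h5⟩ := hc
    refine ⟨h1, ⟨s, ?_, h2⟩, ?_⟩
    · refine (hSQ s).2 ⟨m, σ, ?_, (wenum_iff _ _).2 ⟨k, h3⟩⟩
      rintro ⟨j, hj⟩
      have := h4 j hj
      change _ = σ[j]? at this
      rw [List.getElem?_eq_getElem hj] at this
      rw [← hev]
      exact isPrefixOf_get (isPrefixOf_strPrefix _ _) this
    · have := isPrefixOf_get (isPrefixOf_strPrefix _ _) h5
      rw [hodd] at this
      intro hd
      rw [(hh _).2 hd] at this
      cases this

/-- Lemma 9 of Day–Miller: an `(A ⊕ ∅′)`-computable prefix-free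
sequence of extensions of `τ`, each out of `Q` and keeping half the density. -/
theorem stmt15 (A : ℕ → Bool) (hA : ¬ KTrivial A)
    (P Q : Set (ℕ → Bool)) (hP : Pi01 P)
    (hQ : Pi01In A Q) (hQrand : ∀ X ∈ Q, MLRandomIn A X)
    (τ : List Bool) (δ : ℝ≥0∞) (hδ : 0 < δ) (hd : δ ≤ dens τ (P ∩ Q)) :
    ∃ ρ : ℕ → List Bool,
      FnComputableIn (fun i => Encodable.encode (ρ i)) (joinSet A zeroJump) ∧
      (∀ i j, i ≠ j → ¬ ρ i <+: ρ j) ∧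
      ∀ i, τ <+: ρ i ∧ cylinder (ρ i) ∩ Q = ∅ ∧ δ / 2 ≤ dens (ρ i) P := by
  obtain ⟨SP, hSP, rfl⟩ := hP
  obtain ⟨SQ, ⟨eQ, hSQ⟩, rfl⟩ := hQ
  have hSP' := sig_of_ceStr hSP
  have hδtop : δ ≠ ⊤ := by
    refine ne_top_of_le_ne_top ?_ hd
    exact ENNReal.mul_ne_top (measure_ne_top _ _) (by simp)
  obtain ⟨a, d, hd0, had, hda⟩ := choose_frac hδ hδtop
  let D : List Bool → Prop := fun ρ => dens ρ (openOf SP)ᶜ * (d : ℝ≥0∞) < (a : ℝ≥0∞)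
  have hD : Sig D := by
    have h1 : Sig fun x : Unit × List Bool => x.2 ∈ SP := hSP'.comp Primrec.snd
    exact (sig_dens h1).comp (f := fun ρ : List Bool => ((), ρ, a, d))
      ((Primrec.const ()).pair (Primrec.id.pair ((Primrec.const a).pair (Primrec.const d))))
  obtain ⟨h, hprim, hh⟩ := hD.toJump
  have hpos : 0 < μCantor ((cylinder τ ∩ ((openOf SP)ᶜ ∩ (openOf SQ)ᶜ)) \
      openOf {σ | τ <+: σ ∧ D σ}) := by
    rw [pos_iff_ne_zero]
    intro h0
    have hb := dens_union_bound (openOf SP)ᶜ τ D a d (fun σ hσ => le_of_lt hσ)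
    set V := openOf {σ | τ <+: σ ∧ D σ}
    have h1 : μCantor (cylinder τ ∩ ((openOf SP)ᶜ ∩ (openOf SQ)ᶜ)) ≤
        μCantor ((openOf SP)ᶜ ∩ V) := by
      have hsub : cylinder τ ∩ ((openOf SP)ᶜ ∩ (openOf SQ)ᶜ) ⊆
          ((cylinder τ ∩ ((openOf SP)ᶜ ∩ (openOf SQ)ᶜ)) \ V) ∪ ((openOf SP)ᶜ ∩ V) := by
        intro X hX
        by_cases hV : X ∈ V
        · exact Or.inr ⟨hX.2.1, hV⟩
        · exact Or.inl ⟨hX, hV⟩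
      refine (measure_mono hsub).trans ((measure_union_le _ _).trans ?_)
      rw [h0, zero_add]
    have h2 : δ * d ≤ a := by
      calc δ * d ≤ μCantor (cylinder τ ∩ ((openOf SP)ᶜ ∩ (openOf SQ)ᶜ)) * 2 ^ τ.length * d := by
            gcongr; exact hd
        _ ≤ μCantor ((openOf SP)ᶜ ∩ V) * 2 ^ τ.length * d := by gcongr
        _ = μCantor ((openOf SP)ᶜ ∩ V) * d * 2 ^ τ.length := by rw [mul_right_comm]
        _ ≤ a := hb
    exact absurd h2 (not_le.2 hda)
  have hout : ∀ ρ : List Bool, (∃ s ∈ SQ, s <+: ρ) → cylinder ρ ∩ (openOf SQ)ᶜ = ∅ := by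
    rintro ρ ⟨s, hs, hp⟩
    ext X
    simp only [Set.mem_inter_iff, Set.mem_empty_iff_false, iff_false, not_and]
    intro hX hX'
    exact hX' (mem_openOf.2 ⟨s, hs, isPrefixOf_mono hp hX⟩)
  obtain ⟨ρ, h1, h2, h3⟩ := enum_seq (joinSet A zeroJump) (candF eQ h τ) (prim_candF eQ hprim τ)
    {ρ | τ <+: ρ ∧ (∃ s ∈ SQ, s <+: ρ) ∧ ¬ D ρ}
    (fun ρ => candF_iff A SQ eQ hSQ D h hh τ ρ)
    (fun F hF => exists_ext A hA SP hSP' SQ hQrand D hD τ hpos F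
      (fun f hf => hout f (hF f hf).2.1))
  refine ⟨ρ, h1, h2, fun i => ?_⟩
  obtain ⟨g1, g2, g3⟩ := h3 i
  refine ⟨g1, hout _ g2, ?_⟩
  have g4 : δ / 2 * d ≤ dens (ρ i) (openOf SP)ᶜ * d := had.trans (not_lt.1 g3)
  exact (ENNReal.mul_le_mul_iff_left (by exact_mod_cast hd0.ne') (by simp)).1 g4
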